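/- Let k be a field of characteristic p > 0, G an algebraic group over k, X a G-scheme of finite type over k, and n a positive integer. Then there exists a unique action of the quotient group G/G_n on the categorical quotient X/G_n such that the quotient morphism φ_{X,G_n} : X → X/G_n is equivariant relative to the quotient morphism φ_{G,G_n} : G → G/G_n; moreover, the induced morphism ψ_{X,G_n} : X/G_n → X^{(p^n)} is equivariant relative to ψ_{G,G_n} : G/G_n → G^{(p^n)}. -/

import Mathlib

open AlgebraicGeometry CategoryTheory CategoryTheory.Limits Opposite

universe u

noncomputable section

/-- The spectrum of the field `k`, the base of all schemes considered. -/
abbrev Spk (k : Type u) [Field k] : Scheme.{u} := Spec (CommRingCat.of k)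

/-- A scheme over the field `k`: a scheme together with a structure morphism to `Spec k`. -/
structure SchemeOver (k : Type u) [Field k] : Type (u + 1) where
  carrier : Scheme.{u}
  str : carrier ⟶ Spk k

variable (k : Type u) [Field k]

/-- A group scheme over `k`, presented via its functor of points: for every scheme `T`
and every pair of `T`-points lying over the same `T`-point of `Spec k`, a product point,
together with unit and inverse, satisfying the group axioms functorially. -/
structure GroupSchemeOver extends SchemeOver k where
  mul : ∀ {T : Scheme.{u}} (a b : T ⟶ carrier), a ≫ str = b ≫ str → (T ⟶ carrier)
  one : Spk k ⟶ carrier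
  inv : ∀ {T : Scheme.{u}}, (T ⟶ carrier) → (T ⟶ carrier)
  mul_str : ∀ {T : Scheme.{u}} (a b : T ⟶ carrier) (h), mul a b h ≫ str = a ≫ str
  one_str : one ≫ str = 𝟙 (Spk k)
  inv_str : ∀ {T : Scheme.{u}} (a : T ⟶ carrier), inv a ≫ str = a ≫ str
  mul_natural : ∀ {T' T : Scheme.{u}} (g : T' ⟶ T) (a b : T ⟶ carrier) (h h'),
    g ≫ mul a b h = mul (g ≫ a) (g ≫ b) h'
  inv_natural : ∀ {T' T : Scheme.{u}} (g : T' ⟶ T) (a : T ⟶ carrier),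
    g ≫ inv a = inv (g ≫ a)
  mul_assoc : ∀ {T : Scheme.{u}} (a b c : T ⟶ carrier) (h₁ h₂ h₃ h₄),
    mul (mul a b h₁) c h₂ = mul a (mul b c h₃) h₄
  one_mul : ∀ {T : Scheme.{u}} (a : T ⟶ carrier) (h), mul (a ≫ str ≫ one) a h = a
  mul_one : ∀ {T : Scheme.{u}} (a : T ⟶ carrier) (h), mul a (a ≫ str ≫ one) h = a
  inv_mul : ∀ {T : Scheme.{u}} (a : T ⟶ carrier) (h), mul (inv a) a h = a ≫ str ≫ one

variable {k}

theorem GroupSchemeOver.mul_congr (G : GroupSchemeOver k) {T : Scheme.{u}}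
    {a a' b b' : T ⟶ G.carrier} (ha : a = a') (hb : b = b') (h h') :
    G.mul a b h = G.mul a' b' h' := by subst ha; subst hb; rfl

/-- A homomorphism of group schemes over `k`. -/
structure GroupHom (G H : GroupSchemeOver k) where
  hom : G.carrier ⟶ H.carrier
  hom_str : hom ≫ H.str = G.str
  hom_one : G.one ≫ hom = H.one
  hom_mul : ∀ {T : Scheme.{u}} (a b : T ⟶ G.carrier) (h h'),
    G.mul a b h ≫ hom = H.mul (a ≫ hom) (b ≫ hom) h'

/-- An action of a group scheme `G` over `k` on a scheme `X` over `k`, presented via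
its functor of points. -/
structure ActionOver (G : GroupSchemeOver k) (X : SchemeOver k) where
  act : ∀ {T : Scheme.{u}} (g : T ⟶ G.carrier) (x : T ⟶ X.carrier),
    g ≫ G.str = x ≫ X.str → (T ⟶ X.carrier)
  act_str : ∀ {T : Scheme.{u}} (g : T ⟶ G.carrier) (x : T ⟶ X.carrier) (h),
    act g x h ≫ X.str = x ≫ X.str
  act_natural : ∀ {T' T : Scheme.{u}} (f : T' ⟶ T) (g : T ⟶ G.carrier)
    (x : T ⟶ X.carrier) (h h'), f ≫ act g x h = act (f ≫ g) (f ≫ x) h'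
  one_act : ∀ {T : Scheme.{u}} (x : T ⟶ X.carrier) (h), act (x ≫ X.str ≫ G.one) x h = x
  mul_act : ∀ {T : Scheme.{u}} (g g' : T ⟶ G.carrier) (x : T ⟶ X.carrier) (h₁ h₂ h₃ h₄),
    act (G.mul g g' h₁) x h₂ = act g (act g' x h₃) h₄

theorem ActionOver.act_congr {G : GroupSchemeOver k} {X : SchemeOver k}
    (α : ActionOver G X) {T : Scheme.{u}} {g g' : T ⟶ G.carrier} {x x' : T ⟶ X.carrier}
    (hg : g = g') (hx : x = x') (h h') : α.act g x h = α.act g' x' h' := by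
  subst hg; subst hx; rfl

/-- The action of a group scheme on itself by left translations. -/
def GroupSchemeOver.selfAction (G : GroupSchemeOver k) : ActionOver G G.toSchemeOver where
  act g x h := G.mul g x h
  act_str g x h := (G.mul_str g x h).trans h
  act_natural f g x h h' := G.mul_natural f g x h h'
  one_act x h := G.one_mul x h
  mul_act g g' x h₁ h₂ h₃ h₄ := G.mul_assoc g g' x h₁ h₂ h₃ h₄

/-- Restriction of an action along a homomorphism of group schemes. -/
def ActionOver.res {G H : GroupSchemeOver k} {X : SchemeOver k} (φ : GroupHom H G)
    (α : ActionOver G X) : ActionOver H X where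
  act g x h := α.act (g ≫ φ.hom) x (by rw [Category.assoc, φ.hom_str, h])
  act_str g x h := α.act_str _ _ _
  act_natural f g x h h' := by
    refine (α.act_natural f (g ≫ φ.hom) x _ ?_).trans (α.act_congr ?_ rfl _ _)
    · simp only [Category.assoc, φ.hom_str, ← h']
    · simp only [Category.assoc]
  one_act x h := by
    refine (α.act_congr ?_ rfl _ ?_).trans (α.one_act x ?_)
    · simp only [Category.assoc, φ.hom_one]
    · simp only [Category.assoc, G.one_str, Category.comp_id]
    · simp only [Category.assoc, G.one_str, Category.comp_id]
  mul_act g g' x h₁ h₂ h₃ h₄ := by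
    have hg : g ≫ H.str = x ≫ X.str := (H.mul_str g g' h₁).symm.trans h₂
    have hg' : g' ≫ H.str = x ≫ X.str := h₁.symm.trans hg
    have p1 : (g ≫ φ.hom) ≫ G.str = (g' ≫ φ.hom) ≫ G.str := by
      simp only [Category.assoc, φ.hom_str]; exact h₁
    have p3 : (g' ≫ φ.hom) ≫ G.str = x ≫ X.str := by
      simp only [Category.assoc, φ.hom_str]; exact hg'
    refine (α.act_congr (φ.hom_mul g g' h₁ p1) rfl _ ?_).trans
      (α.mul_act (g ≫ φ.hom) (g' ≫ φ.hom) x p1 ?_ p3 ?_)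
    · rw [G.mul_str]
      simp only [Category.assoc, φ.hom_str]; exact hg
    · rw [G.mul_str]
      simp only [Category.assoc, φ.hom_str]; exact hg
    · rw [α.act_str]
      simp only [Category.assoc, φ.hom_str]; exact hg
/-! ### Vector bundles and line bundles, geometrically -/

/-- The data underlying a (geometric) vector bundle on a scheme `X`: a total space `π : tot ⟶ X`
together with a fiberwise `Γ(T, ⊤)`-module structure on the `T`-points of `tot` over a fixed
`T`-point of `X`, functorially in `T`. -/
structure VecBundleData (X : Scheme.{u}) : Type (u + 1) where
  tot : Scheme.{u}
  π : tot ⟶ X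
  zero : X ⟶ tot
  zero_π : zero ≫ π = 𝟙 X
  add : ∀ {T : Scheme.{u}} (a b : T ⟶ tot), a ≫ π = b ≫ π → (T ⟶ tot)
  smul : ∀ {T : Scheme.{u}} (f : Γ(T, ⊤)) (a : T ⟶ tot), T ⟶ tot
  add_π : ∀ {T : Scheme.{u}} (a b : T ⟶ tot) (h), add a b h ≫ π = a ≫ π
  smul_π : ∀ {T : Scheme.{u}} (f : Γ(T, ⊤)) (a : T ⟶ tot), smul f a ≫ π = a ≫ π
  add_natural : ∀ {T' T : Scheme.{u}} (g : T' ⟶ T) (a b : T ⟶ tot) (h h'),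
    g ≫ add a b h = add (g ≫ a) (g ≫ b) h'
  smul_natural : ∀ {T' T : Scheme.{u}} (g : T' ⟶ T) (f : Γ(T, ⊤)) (a : T ⟶ tot),
    g ≫ smul f a = smul (g.appTop f) (g ≫ a)
  add_comm : ∀ {T : Scheme.{u}} (a b : T ⟶ tot) (h h'), add a b h = add b a h'
  add_assoc : ∀ {T : Scheme.{u}} (a b c : T ⟶ tot) (h₁ h₂ h₃ h₄),
    add (add a b h₁) c h₂ = add a (add b c h₃) h₄
  zero_add : ∀ {T : Scheme.{u}} (a : T ⟶ tot) (h), add ((a ≫ π) ≫ zero) a h = a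
  one_smul : ∀ {T : Scheme.{u}} (a : T ⟶ tot), smul 1 a = a
  mul_smul : ∀ {T : Scheme.{u}} (f g : Γ(T, ⊤)) (a : T ⟶ tot), smul (f * g) a = smul f (smul g a)
  smul_add : ∀ {T : Scheme.{u}} (f : Γ(T, ⊤)) (a b : T ⟶ tot) (h h'),
    smul f (add a b h) = add (smul f a) (smul f b) h'
  add_smul : ∀ {T : Scheme.{u}} (f g : Γ(T, ⊤)) (a : T ⟶ tot) (h),
    smul (f + g) a = add (smul f a) (smul g a) h
  zero_smul : ∀ {T : Scheme.{u}} (a : T ⟶ tot), smul 0 a = (a ≫ π) ≫ zero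
  smul_zero : ∀ {T : Scheme.{u}} (f : Γ(T, ⊤)) (x : T ⟶ X), smul f (x ≫ zero) = x ≫ zero

namespace VecBundleData

variable {X : Scheme.{u}} (E : VecBundleData X)

theorem add_congr {T : Scheme.{u}} {a a' b b' : T ⟶ E.tot} (ha : a = a') (hb : b = b')
    (h h') : E.add a b h = E.add a' b' h' := by subst ha; subst hb; rfl

/-- The fiber of a vector bundle over a `T`-point of the base. -/
abbrev Fiber {T : Scheme.{u}} (x : T ⟶ X) : Type u := { a : T ⟶ E.tot // a ≫ E.π = x }

instance fiberZero {T : Scheme.{u}} (x : T ⟶ X) : Zero (E.Fiber x) :=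
  ⟨⟨x ≫ E.zero, by rw [Category.assoc, E.zero_π, Category.comp_id]⟩⟩

instance fiberAdd {T : Scheme.{u}} (x : T ⟶ X) : Add (E.Fiber x) :=
  ⟨fun a b => ⟨E.add a.1 b.1 (a.2.trans b.2.symm), (E.add_π _ _ _).trans a.2⟩⟩

instance fiberSMul {T : Scheme.{u}} (x : T ⟶ X) : SMul Γ(T, ⊤) (E.Fiber x) :=
  ⟨fun f a => ⟨E.smul f a.1, (E.smul_π _ _).trans a.2⟩⟩

@[simp] theorem coe_fiber_zero {T : Scheme.{u}} (x : T ⟶ X) :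
    ((0 : E.Fiber x) : T ⟶ E.tot) = x ≫ E.zero := rfl

@[simp] theorem coe_fiber_add {T : Scheme.{u}} (x : T ⟶ X) (a b : E.Fiber x) :
    ((a + b : E.Fiber x) : T ⟶ E.tot) = E.add a.1 b.1 (a.2.trans b.2.symm) := rfl

@[simp] theorem coe_fiber_smul {T : Scheme.{u}} (x : T ⟶ X) (f : Γ(T, ⊤)) (a : E.Fiber x) :
    ((f • a : E.Fiber x) : T ⟶ E.tot) = E.smul f a.1 := rfl

instance {T : Scheme.{u}} (x : T ⟶ X) : AddCommMonoid (E.Fiber x) where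
  add_assoc a b c := Subtype.ext (E.add_assoc _ _ _ _ _ _ _)
  add_comm a b := Subtype.ext (E.add_comm _ _ _ _)
  zero_add a := Subtype.ext (by
    have hz : ((a.1 ≫ E.π) ≫ E.zero) ≫ E.π = a.1 ≫ E.π := by
      rw [Category.assoc, E.zero_π, Category.comp_id]
    show E.add (x ≫ E.zero) a.1 _ = a.1
    exact (E.add_congr (by rw [a.2]) rfl _ hz).trans (E.zero_add a.1 hz))
  add_zero a := Subtype.ext (by
    have hz : ((a.1 ≫ E.π) ≫ E.zero) ≫ E.π = a.1 ≫ E.π := by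
      rw [Category.assoc, E.zero_π, Category.comp_id]
    have hz' : (x ≫ E.zero) ≫ E.π = a.1 ≫ E.π := by
      rw [Category.assoc, E.zero_π, Category.comp_id, a.2]
    show E.add a.1 (x ≫ E.zero) _ = a.1
    exact (E.add_comm _ _ _ hz').trans
      ((E.add_congr (by rw [a.2]) rfl _ hz).trans (E.zero_add a.1 hz)))
  nsmul := nsmulRec
  nsmul_zero _ := rfl
  nsmul_succ _ _ := rfl

instance {T : Scheme.{u}} (x : T ⟶ X) : Module Γ(T, ⊤) (E.Fiber x) where
  one_smul a := Subtype.ext (E.one_smul a.1)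
  mul_smul f g a := Subtype.ext (E.mul_smul f g a.1)
  smul_zero f := Subtype.ext (E.smul_zero f x)
  smul_add f a b := Subtype.ext (E.smul_add f a.1 b.1 _ _)
  add_smul f g a := Subtype.ext (E.add_smul f g a.1 _)
  zero_smul a := Subtype.ext ((E.zero_smul a.1).trans (by rw [a.2]; rfl))

/-- A family of `n` local sections of `E` over an open subset `U` is a frame if every point
of the total space over `U` is, in a unique way, a linear combination of these sections. -/
def IsFrame {n : ℕ} (U : X.Opens) (s : Fin n → (U.toScheme ⟶ E.tot)) : Prop :=
  ∃ hs : ∀ i, s i ≫ E.π = U.ι,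
    ∀ {T : Scheme.{u}} (x : T ⟶ U.toScheme),
      Function.Bijective (fun f : Fin n → Γ(T, ⊤) =>
        (∑ i, f i • (⟨x ≫ s i, by rw [Category.assoc, hs i]⟩ : E.Fiber (x ≫ U.ι))))

/-- A family of `n` global sections of `E` is a global frame if every point of the total
space is, in a unique way, a linear combination of these sections. -/
def IsGlobalFrame {n : ℕ} (s : Fin n → (X ⟶ E.tot)) : Prop :=
  ∃ hs : ∀ i, s i ≫ E.π = 𝟙 X,
    ∀ {T : Scheme.{u}} (x : T ⟶ X),
      Function.Bijective (fun f : Fin n → Γ(T, ⊤) =>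
        (∑ i, f i • (⟨x ≫ s i, by rw [Category.assoc, hs i, Category.comp_id]⟩ : E.Fiber x)))

end VecBundleData

/-- A (geometric) vector bundle of rank `n` on `X`: bundle data which is locally trivial,
i.e. admits local frames around every point of `X`. -/
structure VecBundle (n : ℕ) (X : Scheme.{u}) extends VecBundleData X where
  locTriv : ∀ x : X, ∃ (U : X.Opens) (s : Fin n → (U.toScheme ⟶ tot)),
    x ∈ U ∧ toVecBundleData.IsFrame U s

/-- A (geometric) line bundle on a scheme. -/
abbrev LineBundle (X : Scheme.{u}) := VecBundle 1 X

/-- A morphism of total spaces of vector bundles over `X` is linear if it commutes with the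
projections, the fiberwise additions and the fiberwise scalar multiplications. -/
def IsLinearHom {X : Scheme.{u}} (E F : VecBundleData X) (φ : E.tot ⟶ F.tot) : Prop :=
  (φ ≫ F.π = E.π) ∧
  (∀ {T : Scheme.{u}} (a b : T ⟶ E.tot) (h h'), E.add a b h ≫ φ = F.add (a ≫ φ) (b ≫ φ) h') ∧
  (∀ {T : Scheme.{u}} (f : Γ(T, ⊤)) (a : T ⟶ E.tot), E.smul f a ≫ φ = F.smul f (a ≫ φ))

/-- Two vector bundles on `X` are isomorphic if there is a linear isomorphism between them. -/
def VBIso {X : Scheme.{u}} {n m : ℕ} (E : VecBundle n X) (F : VecBundle m X) : Prop :=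
  ∃ φ : E.tot ⟶ F.tot, IsLinearHom E.toVecBundleData F.toVecBundleData φ ∧ IsIso φ

/-- `F` is a pullback of the vector bundle `E` along `g : Y ⟶ X`. -/
def IsPullbackBundle {Y X : Scheme.{u}} (g : Y ⟶ X) {n : ℕ} (E : VecBundle n X)
    (F : VecBundle n Y) : Prop :=
  ∃ τ : F.tot ⟶ E.tot,
    (τ ≫ E.π = F.π ≫ g) ∧
    (∀ {T : Scheme.{u}} (a b : T ⟶ F.tot) (h h'), F.add a b h ≫ τ = E.add (a ≫ τ) (b ≫ τ) h') ∧
    (∀ {T : Scheme.{u}} (f : Γ(T, ⊤)) (a : T ⟶ F.tot), F.smul f a ≫ τ = E.smul f (a ≫ τ)) ∧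
    (∀ {T : Scheme.{u}} (y : T ⟶ Y) (a : T ⟶ E.tot), a ≫ E.π = y ≫ g →
      ∃! b : T ⟶ F.tot, b ≫ F.π = y ∧ b ≫ τ = a)

/-- A vector bundle is trivial if it admits a global frame. -/
def IsTrivialBundle {X : Scheme.{u}} {n : ℕ} (E : VecBundle n X) : Prop :=
  ∃ s : Fin n → (X ⟶ E.tot), E.toVecBundleData.IsGlobalFrame s

/-- `N` is a tensor product of the line bundles `L` and `M`: witnessed by a fiberwise
bilinear pairing taking local frames to local frames. -/
def IsTensor {X : Scheme.{u}} (L M N : LineBundle X) : Prop :=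
  ∃ β : ∀ {T : Scheme.{u}} (a : T ⟶ L.tot) (b : T ⟶ M.tot), a ≫ L.π = b ≫ M.π → (T ⟶ N.tot),
    (∀ {T : Scheme.{u}} (a : T ⟶ L.tot) (b : T ⟶ M.tot) (h), β a b h ≫ N.π = a ≫ L.π) ∧
    (∀ {T' T : Scheme.{u}} (g : T' ⟶ T) (a : T ⟶ L.tot) (b : T ⟶ M.tot) (h h'),
      g ≫ β a b h = β (g ≫ a) (g ≫ b) h') ∧
    (∀ {T : Scheme.{u}} (a a' : T ⟶ L.tot) (b : T ⟶ M.tot) (h₁ h₂ h₃ h₄ h₅),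
      β (L.add a a' h₁) b h₂ = N.add (β a b h₃) (β a' b h₄) h₅) ∧
    (∀ {T : Scheme.{u}} (a : T ⟶ L.tot) (b b' : T ⟶ M.tot) (h₁ h₂ h₃ h₄ h₅),
      β a (M.add b b' h₁) h₂ = N.add (β a b h₃) (β a b' h₄) h₅) ∧
    (∀ {T : Scheme.{u}} (f : Γ(T, ⊤)) (a : T ⟶ L.tot) (b : T ⟶ M.tot) (h₁ h₂),
      β (L.smul f a) b h₁ = N.smul f (β a b h₂)) ∧
    (∀ {T : Scheme.{u}} (f : Γ(T, ⊤)) (a : T ⟶ L.tot) (b : T ⟶ M.tot) (h₁ h₂),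
      β a (M.smul f b) h₁ = N.smul f (β a b h₂)) ∧
    (∀ (U : X.Opens) (sL : Fin 1 → (U.toScheme ⟶ L.tot)) (sM : Fin 1 → (U.toScheme ⟶ M.tot)),
      L.toVecBundleData.IsFrame U sL → M.toVecBundleData.IsFrame U sM →
      ∀ (h : sL 0 ≫ L.π = sM 0 ≫ M.π),
        N.toVecBundleData.IsFrame (n := 1) U (fun _ => β (sL 0) (sM 0) h))

/-- `N` is an `m`-th tensor power of the line bundle `L`. -/
def IsTensorPow {X : Scheme.{u}} (L : LineBundle X) : ℕ → LineBundle X → Prop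
  | 0, N => IsTrivialBundle N
  | m + 1, N => ∃ M : LineBundle X, IsTensorPow L m M ∧ IsTensor M L N

/-- A line bundle is ample if the base is quasi-compact and quasi-separated and the
non-vanishing loci of global sections of positive tensor powers give an affine open cover. -/
def IsAmple {X : Scheme.{u}} (L : LineBundle X) : Prop :=
  CompactSpace X ∧ QuasiSeparatedSpace X ∧
  ∀ x : X, ∃ (m : ℕ), 0 < m ∧ ∃ (N : LineBundle X), IsTensorPow L m N ∧
    ∃ (s : X ⟶ N.tot), s ≫ N.π = 𝟙 X ∧
      ∃ U : X.Opens, IsAffineOpen U ∧ x ∈ U ∧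
        (U : Set X) = {y : X | s.base y ≠ N.zero.base y}
/-! ### Properties of schemes and group schemes over `k` -/

/-- An algebraic group over `k` is a group scheme of finite type over `k`. -/
def GroupSchemeOver.IsAlgebraic {k : Type u} [Field k] (G : GroupSchemeOver k) : Prop :=
  LocallyOfFiniteType G.str ∧ QuasiCompact G.str

/-- A scheme of finite type over `k`. -/
def SchemeOver.IsFiniteType {k : Type u} [Field k] (X : SchemeOver k) : Prop :=
  LocallyOfFiniteType X.str ∧ QuasiCompact X.str

/-- A variety over `k`: an integral separated scheme of finite type over `k`. -/
def SchemeOver.IsVariety {k : Type u} [Field k] (X : SchemeOver k) : Prop :=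
  IsIntegral X.carrier ∧ AlgebraicGeometry.IsSeparated X.str ∧ X.IsFiniteType

/-- A scheme is normal if all its local rings are integrally closed domains. -/
def IsNormalScheme (X : Scheme.{u}) : Prop :=
  ∀ x : X, IsDomain (X.presheaf.stalk x) ∧ IsIntegrallyClosed (X.presheaf.stalk x)

/-- The base change of a scheme over `k` to the algebraic closure of `k`. -/
def SchemeOver.geomFiber {k : Type u} [Field k] (X : SchemeOver k) : Scheme.{u} :=
  pullback X.str (Spec.map (CommRingCat.ofHom (algebraMap k (AlgebraicClosure k))))

/-- A scheme over `k` is geometrically integral if its base change to an algebraic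
closure of `k` is integral. -/
def SchemeOver.IsGeomIntegral {k : Type u} [Field k] (X : SchemeOver k) : Prop :=
  IsIntegral X.geomFiber

/-- A scheme over `k` is geometrically connected if its base change to an algebraic
closure of `k` is connected. -/
def SchemeOver.IsGeomConnected {k : Type u} [Field k] (X : SchemeOver k) : Prop :=
  ConnectedSpace X.geomFiber

/-- A scheme over `k` is geometrically irreducible if its base change to an algebraic
closure of `k` is irreducible. -/
def SchemeOver.IsGeomIrreducible {k : Type u} [Field k] (X : SchemeOver k) : Prop :=
  IrreducibleSpace X.geomFiber

/-- An open subscheme of a scheme over `k`, as a scheme over `k`. -/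
def SchemeOver.ofOpens {k : Type u} [Field k] (X : SchemeOver k) (U : X.carrier.Opens) :
    SchemeOver k :=
  ⟨U.toScheme, U.ι ≫ X.str⟩

/-- A scheme over `k` is quasi-projective if it is separated, of finite type, and carries
an ample line bundle. -/
def SchemeOver.IsQuasiProjective {k : Type u} [Field k] (X : SchemeOver k) : Prop :=
  AlgebraicGeometry.IsSeparated X.str ∧ X.IsFiniteType ∧
    ∃ L : LineBundle X.carrier, IsAmple L

/-- An open subset of `X` is stable under an action of `G` if the action preserves its
`T`-points, for all `T`. -/
def ActionOver.Stable {k : Type u} [Field k] {G : GroupSchemeOver k} {X : SchemeOver k}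
    (α : ActionOver G X) (U : X.carrier.Opens) : Prop :=
  ∀ {T : Scheme.{u}} (g : T ⟶ G.carrier) (x : T ⟶ X.carrier) (h),
    Set.range x.base ⊆ (U : Set X.carrier) →
      Set.range (α.act g x h).base ⊆ (U : Set X.carrier)

/-- A `G`-linearization of a vector bundle `E` on a `G`-scheme `X`: an action of `G` on the
total space of `E`, lifting the action on `X` and acting linearly on the fibers (equivalently,
an action of `G × 𝔾ₘ` on `E` for which the projection is equivariant and `𝔾ₘ` acts by
multiplication on the fibers). -/
structure LinearizationData {k : Type u} [Field k] {G : GroupSchemeOver k} {X : SchemeOver k}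
    (α : ActionOver G X) {n : ℕ} (E : VecBundle n X.carrier) where
  lact : ∀ {T : Scheme.{u}} (g : T ⟶ G.carrier) (e : T ⟶ E.tot),
    g ≫ G.str = (e ≫ E.π) ≫ X.str → (T ⟶ E.tot)
  lact_π : ∀ {T : Scheme.{u}} (g : T ⟶ G.carrier) (e : T ⟶ E.tot) (h h'),
    lact g e h ≫ E.π = α.act g (e ≫ E.π) h'
  lact_natural : ∀ {T' T : Scheme.{u}} (f : T' ⟶ T) (g : T ⟶ G.carrier) (e : T ⟶ E.tot) (h h'),
    f ≫ lact g e h = lact (f ≫ g) (f ≫ e) h'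
  one_lact : ∀ {T : Scheme.{u}} (e : T ⟶ E.tot) (h), lact (((e ≫ E.π) ≫ X.str) ≫ G.one) e h = e
  mul_lact : ∀ {T : Scheme.{u}} (g g' : T ⟶ G.carrier) (e : T ⟶ E.tot) (h₁ h₂ h₃ h₄),
    lact (G.mul g g' h₁) e h₂ = lact g (lact g' e h₃) h₄
  lact_add : ∀ {T : Scheme.{u}} (g : T ⟶ G.carrier) (a b : T ⟶ E.tot) (h₁ h₂ h₃ h₄ h₅),
    lact g (E.add a b h₁) h₂ = E.add (lact g a h₃) (lact g b h₄) h₅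
  lact_smul : ∀ {T : Scheme.{u}} (g : T ⟶ G.carrier) (f : Γ(T, ⊤)) (a : T ⟶ E.tot) (h₁ h₂),
    lact g (E.smul f a) h₁ = E.smul f (lact g a h₂)

/-- A vector bundle is `G`-linearized (linearizable) if it admits a linearization. -/
def ActionOver.IsLinearized {k : Type u} [Field k] {G : GroupSchemeOver k} {X : SchemeOver k}
    (α : ActionOver G X) {n : ℕ} (E : VecBundle n X.carrier) : Prop :=
  Nonempty (LinearizationData α E)

/-- Equivariance of a morphism relative to a homomorphism of group schemes. -/
def IsEquivariantRel {k : Type u} [Field k] {G H : GroupSchemeOver k} {X Y : SchemeOver k}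
    (φ : GroupHom G H) (α : ActionOver G X) (β : ActionOver H Y)
    (f : X.carrier ⟶ Y.carrier) : Prop :=
  f ≫ Y.str = X.str ∧
  ∀ {T : Scheme.{u}} (g : T ⟶ G.carrier) (x : T ⟶ X.carrier) (h h'),
    α.act g x h ≫ f = β.act (g ≫ φ.hom) (x ≫ f) h'

/-- Equivariance of a morphism of `G`-schemes. -/
def IsEquivariant {k : Type u} [Field k] {G : GroupSchemeOver k} {X Y : SchemeOver k}
    (α : ActionOver G X) (β : ActionOver G Y) (f : X.carrier ⟶ Y.carrier) : Prop :=
  f ≫ Y.str = X.str ∧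
  ∀ {T : Scheme.{u}} (g : T ⟶ G.carrier) (x : T ⟶ X.carrier) (h h'),
    α.act g x h ≫ f = β.act g (x ≫ f) h'

/-- A `T`-point of `G` acts trivially if it acts trivially on all points of `X` over `T`. -/
def ActionOver.ActsTrivially {k : Type u} [Field k] {G : GroupSchemeOver k}
    {X : SchemeOver k} (α : ActionOver G X) {T : Scheme.{u}} (g : T ⟶ G.carrier) : Prop :=
  ∀ {T' : Scheme.{u}} (t : T' ⟶ T) (x : T' ⟶ X.carrier) (h), α.act (t ≫ g) x h = x

/-- An action is almost faithful if its kernel is finite, i.e. all trivially acting points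
factor through a fixed closed subscheme of `G` which is finite over `k`. -/
def ActionOver.IsAlmostFaithful {k : Type u} [Field k] {G : GroupSchemeOver k}
    {X : SchemeOver k} (α : ActionOver G X) : Prop :=
  ∃ (K : Scheme.{u}) (ι : K ⟶ G.carrier), IsClosedImmersion ι ∧ IsFinite (ι ≫ G.str) ∧
    ∀ {T : Scheme.{u}} (g : T ⟶ G.carrier), α.ActsTrivially g → ∃ g' : T ⟶ K, g' ≫ ι = g

/-- An abelian variety over `k` is a smooth connected proper algebraic group over `k`. -/
def GroupSchemeOver.IsAbelianVariety {k : Type u} [Field k] (G : GroupSchemeOver k) : Prop :=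
  G.IsAlgebraic ∧ IsSmooth G.str ∧ ConnectedSpace G.carrier ∧ IsProper G.str
/-! ### Frobenius twists and quotients in characteristic `p` -/

/-- The morphism `Spec k ⟶ Spec k` induced by the `n`-th iterate of the Frobenius of `k`. -/
def frobSpec (k : Type u) [Field k] (p : ℕ) [Fact p.Prime] [CharP k p] (n : ℕ) :
    Spk k ⟶ Spk k :=
  Spec.map (CommRingCat.ofHom (iterateFrobenius k p n))

/-- `F : X ⟶ X` is the absolute `q`-power Frobenius endomorphism of `X`: the identity on the
underlying space, and the `q`-th power map on functions. -/
def IsAbsoluteFrobenius (X : Scheme.{u}) (q : ℕ) (F : X ⟶ X) : Prop :=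
  (∀ x : X, F.base x = x) ∧
  ∀ (U : X.Opens) (e : Opposite.op U = Opposite.op (F ⁻¹ᵁ U)) (a : Γ(X, U)),
    F.app U a = X.presheaf.map (eqToHom e) (a ^ q)

/-- Data exhibiting the `n`-th Frobenius twist `X^{(pⁿ)}` of a scheme `X` over `k` (as the base
change of `X` along the `n`-th Frobenius of `k`), together with the relative Frobenius morphism
`F^n_{X/k} : X ⟶ X^{(pⁿ)}` (the canonical factorization of the absolute Frobenius). -/
structure FrobeniusData (k : Type u) [Field k] (p : ℕ) [Fact p.Prime] [CharP k p] (n : ℕ)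
    (X : SchemeOver k) where
  tw : SchemeOver k
  pr : tw.carrier ⟶ X.carrier
  is_pullback : IsPullback pr tw.str X.str (frobSpec k p n)
  rel : X.carrier ⟶ tw.carrier
  rel_str : rel ≫ tw.str = X.str
  abs : X.carrier ⟶ X.carrier
  abs_frob : IsAbsoluteFrobenius X.carrier (p ^ n) abs
  rel_pr : rel ≫ pr = abs

/-- A group scheme over `k` is infinitesimal if it is finite and radicial over `Spec k`. -/
def GroupSchemeOver.IsInfinitesimal {k : Type u} [Field k] (I : GroupSchemeOver k) : Prop :=
  I.IsAlgebraic ∧ IsFinite I.str ∧ UniversallyInjective I.str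

/-- `n` is at least the height of the infinitesimal group scheme `I`, i.e. the `n`-th relative
Frobenius of `I` factors through the unit section of the twist (equivalently `I_n = I`). -/
def FrobKillsAt (k : Type u) [Field k] (p : ℕ) [Fact p.Prime] [CharP k p]
    (I : GroupSchemeOver k) (n : ℕ) : Prop :=
  ∀ FD : FrobeniusData k p n I.toSchemeOver,
    ∃ u : Spk k ⟶ FD.tw.carrier,
      u ≫ FD.pr = frobSpec k p n ≫ I.one ∧ u ≫ FD.tw.str = 𝟙 (Spk k) ∧
      FD.rel = I.str ≫ u

/-- `φ : X ⟶ Q` is a categorical quotient (in the category of schemes over `k`) of `X` by the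
action `α`. -/
def IsCatQuotient {k : Type u} [Field k] {I : GroupSchemeOver k} {X : SchemeOver k}
    (α : ActionOver I X) (Q : SchemeOver k) (φ : X.carrier ⟶ Q.carrier) : Prop :=
  φ ≫ Q.str = X.str ∧
  (∀ {T : Scheme.{u}} (g : T ⟶ I.carrier) (x : T ⟶ X.carrier) (h),
    α.act g x h ≫ φ = x ≫ φ) ∧
  ∀ (Z : SchemeOver k) (u : X.carrier ⟶ Z.carrier), u ≫ Z.str = X.str →
    (∀ {T : Scheme.{u}} (g : T ⟶ I.carrier) (x : T ⟶ X.carrier) (h),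
      α.act g x h ≫ u = x ≫ u) →
    ∃! v : Q.carrier ⟶ Z.carrier, φ ≫ v = u

/-- Data exhibiting the Frobenius twist `G^{(pⁿ)}` of a group scheme `G` over `k`, as a group
scheme, together with the relative Frobenius homomorphism. -/
structure TwistedGroupData (k : Type u) [Field k] (p : ℕ) [Fact p.Prime] [CharP k p] (n : ℕ)
    (G : GroupSchemeOver k) where
  tw : GroupSchemeOver k
  pr : tw.carrier ⟶ G.carrier
  is_pullback : IsPullback pr tw.str G.str (frobSpec k p n)
  pr_mul : ∀ {T : Scheme.{u}} (a b : T ⟶ tw.carrier) (h h'),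
    tw.mul a b h ≫ pr = G.mul (a ≫ pr) (b ≫ pr) h'
  rel : GroupHom G tw
  abs : G.carrier ⟶ G.carrier
  abs_frob : IsAbsoluteFrobenius G.carrier (p ^ n) abs
  rel_pr : rel.hom ≫ pr = abs

/-- Data exhibiting the Frobenius twist of an action: the induced action of `G^{(pⁿ)}` on
`X^{(pⁿ)}`, compatible with the projections and with the relative Frobenii. -/
structure TwistedActionData {k : Type u} [Field k] {p : ℕ} [Fact p.Prime] [CharP k p] {n : ℕ}
    {G : GroupSchemeOver k} {X : SchemeOver k} (α : ActionOver G X)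
    (GT : TwistedGroupData k p n G) (FD : FrobeniusData k p n X) where
  tact : ActionOver GT.tw FD.tw
  compat : ∀ {T : Scheme.{u}} (g : T ⟶ GT.tw.carrier) (x : T ⟶ FD.tw.carrier) (h h'),
    tact.act g x h ≫ FD.pr = α.act (g ≫ GT.pr) (x ≫ FD.pr) h'
  rel_equivariant : ∀ {T : Scheme.{u}} (g : T ⟶ G.carrier) (x : T ⟶ X.carrier) (h h'),
    α.act g x h ≫ FD.rel = tact.act (g ≫ GT.rel.hom) (x ≫ FD.rel) h'


open TensorProduct in
theorem fq_flat_equalizer {C C' A D : Type u} [CommRing C] [CommRing C'] [CommRing A] [CommRing D]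
    [Algebra C C'] [Algebra C A] [Algebra C D] [Module.Flat C C'] (d₁ d₂ : A →ₐ[C] D)
    (hinj : Function.Injective (algebraMap C A))
    (hex : ∀ a, d₁ a = d₂ a → a ∈ Set.range (algebraMap C A)) :
    Function.Injective (Algebra.TensorProduct.includeLeftRingHom : C' →+* C' ⊗[C] A) ∧
    ∀ z : C' ⊗[C] A, Algebra.TensorProduct.map (AlgHom.id C C') d₁ z =
      Algebra.TensorProduct.map (AlgHom.id C C') d₂ z →
      z ∈ Set.range (Algebra.TensorProduct.includeLeftRingHom : C' →+* C' ⊗[C] A) := by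
  constructor
  · exact Algebra.TensorProduct.includeLeft_injective (S := C') hinj
  · intro z hz
    have hE : Function.Exact (Algebra.linearMap C A) (d₁.toLinearMap - d₂.toLinearMap) := by
      intro a
      constructor
      · intro h
        exact hex a (by simpa [sub_eq_zero] using h)
      · rintro ⟨c, rfl⟩
        simp
    have hE' := Module.Flat.lTensor_exact C' hE
    have h0 : LinearMap.lTensor C' (d₁.toLinearMap - d₂.toLinearMap) z = 0 := by
      rw [LinearMap.lTensor_sub, LinearMap.sub_apply, sub_eq_zero]
      exact hz
    obtain ⟨w, rfl⟩ := (hE' z).1 h0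
    refine ⟨TensorProduct.rid C C' w, ?_⟩
    clear h0 hz
    induction w with
    | zero => simp
    | add x y hx hy => simp only [map_add, hx, hy]
    | tmul x c =>
      simp [Algebra.TensorProduct.includeLeftRingHom_apply, Algebra.algebraMap_eq_smul_one, TensorProduct.smul_tmul]

/-- chart -/
structure FQChart (p n : ℕ) {R X Y : Scheme.{u}} (φ : X ⟶ Y) (r₁ r₂ : R ⟶ X)
    {C A D : CommRingCat.{u}} (s : C ⟶ A) (d₁ d₂ : A ⟶ D)
    (j : Spec C ⟶ Y) (i : Spec A ⟶ X) (l : Spec D ⟶ R) : Prop where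
  oi : IsOpenImmersion j
  pb : IsPullback i (Spec.map s) φ j
  l₁ : l ≫ r₁ = Spec.map d₁ ≫ i
  l₂ : l ≫ r₂ = Spec.map d₂ ≫ i
  w : s ≫ d₁ = s ≫ d₂
  inj : Function.Injective s.hom
  ex : ∀ a : A, d₁.hom a = d₂.hom a → a ∈ Set.range s.hom
  pow : ∀ a : A, a ^ p ^ n ∈ Set.range s.hom
  char : (p : C) = 0

/-- good quotient -/
structure FQGood (p n : ℕ) {R X Y : Scheme.{u}} (φ : X ⟶ Y) (r₁ r₂ : R ⟶ X) : Prop where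
  w : r₁ ≫ φ = r₂ ≫ φ
  chart : ∀ y : Y, ∃ (C A D : CommRingCat.{u}) (s : C ⟶ A) (d₁ d₂ : A ⟶ D)
    (j : Spec C ⟶ Y) (i : Spec A ⟶ X) (l : Spec D ⟶ R),
    FQChart p n φ r₁ r₂ s d₁ d₂ j i l ∧ y ∈ Set.range j

section
variable {p n : ℕ} {R X Y : Scheme.{u}} {φ : X ⟶ Y} {r₁ r₂ : R ⟶ X}

theorem fq_local (P : MorphismProperty Scheme.{u}) [IsZariskiLocalAtTarget P]
    (h : FQGood p n φ r₁ r₂)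
    (H : ∀ (C A : CommRingCat.{u}) (s : C ⟶ A), Function.Injective s.hom →
      (∀ a : A, a ^ p ^ n ∈ Set.range s.hom) → (p : C) = 0 → P (Spec.map s)) : P φ := by
  choose C A D s d₁ d₂ j i l hc hy using h.chart
  have := fun y => (hc y).oi
  refine IsZariskiLocalAtTarget.of_iSup_eq_top (P := P) (fun y : Y => (j y).opensRange) ?_ ?_
  · refine top_le_iff.mp fun y _ => ?_
    simp only [TopologicalSpace.Opens.mem_iSup]
    exact ⟨y, hy y⟩
  · intro y
    refine (P.arrow_mk_iso_iff (morphismRestrictOpensRange φ _)).mpr ?_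
    have hP := H _ _ (s y) (hc y).inj (hc y).pow (hc y).char
    have e := (hc y).pb.isoPullback_inv_snd
    have := (P.cancel_left_of_respectsIso (hc y).pb.isoPullback.inv (Spec.map (s y))).2 hP
    rw [e] at this
    exact this

theorem fq_univClosed [Fact p.Prime] (h : FQGood p n φ r₁ r₂) : UniversallyClosed φ := by
  refine fq_local @UniversallyClosed h fun C A s _ hp _ => ?_
  suffices IsIntegralHom (Spec.map s) from inferInstance
  rw [IsIntegralHom.SpecMap_iff]
  intro a
  obtain ⟨c, hc⟩ := hp a
  have hpos : 0 < p ^ n := pow_pos (Fact.out : p.Prime).pos n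
  letI := s.hom.toAlgebra
  refine IsIntegral.of_pow (R := C) hpos ?_
  rw [← hc]
  exact isIntegral_algebraMap

theorem fq_surjective [Fact p.Prime] (h : FQGood p n φ r₁ r₂) : Surjective φ := by
  refine fq_local @Surjective h fun C A s hi hp _ => ?_
  have hpos : 0 < p ^ n := pow_pos (Fact.out : p.Prime).pos n
  have := PrimeSpectrum.isHomeomorph_comap s.hom (fun x => ⟨_, hpos, hp x⟩)
    (by rw [(RingHom.injective_iff_ker_eq_bot _).1 hi]; exact bot_le)
  exact ⟨this.surjective⟩

theorem fq_univInj [Fact p.Prime] (h : FQGood p n φ r₁ r₂) : UniversallyInjective φ := by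
  refine fq_local @UniversallyInjective h fun C A s _ hp h0 => ?_
  refine ((tfae_universallyInjective _).out 0 1).2 ?_
  intro K _ x y hxy
  obtain ⟨x, rfl⟩ := Spec.map_surjective x
  obtain ⟨y, rfl⟩ := Spec.map_surjective y
  simp only [← Spec.map_comp] at hxy
  have hxy := Spec.map_injective hxy
  congr 1
  ext a
  have : (p : K) = 0 := by
    have := congrArg (s ≫ x).hom h0
    simpa using this
  have : CharP K p := (CharP.charP_iff_prime_eq_zero (Fact.out : p.Prime)).2 this
  obtain ⟨c, hc⟩ := hp a
  apply iterateFrobenius_inj K p n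
  simp only [iterateFrobenius_def]
  rw [← map_pow, ← map_pow, ← hc]
  exact congr($hxy c)

end

open TensorProduct in
theorem fq_ring {C A D C' B : CommRingCat.{u}} {s : C ⟶ A} {d₁ d₂ : A ⟶ D}
    (w : s ≫ d₁ = s ≫ d₂) (inj : Function.Injective s.hom)
    (ex : ∀ a : A, d₁.hom a = d₂.hom a → a ∈ Set.range s.hom)
    {c : C ⟶ C'} (hc : c.hom.Flat) {in₁ : C' ⟶ B} {in₂ : A ⟶ B} (po : IsPushout c s in₁ in₂) :
    Function.Injective in₁.hom ∧
    ∀ b : B, (∀ (E : CommRingCat.{u}) (e₁ e₂ : B ⟶ E) (ρ : D ⟶ E), in₁ ≫ e₁ = in₁ ≫ e₂ →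
      in₂ ≫ e₁ = d₁ ≫ ρ → in₂ ≫ e₂ = d₂ ≫ ρ → e₁.hom b = e₂.hom b) → b ∈ Set.range in₁.hom := by
  letI := c.hom.toAlgebra
  letI := s.hom.toAlgebra
  letI := (s ≫ d₁).hom.toAlgebra
  have : Module.Flat C C' := hc
  let δ₁ : A →ₐ[C] D := { d₁.hom with commutes' := fun r => rfl }
  let δ₂ : A →ₐ[C] D := { d₂.hom with commutes' := fun r => (congr($(w) r)).symm }
  obtain ⟨h1, h2⟩ := fq_flat_equalizer (C' := C') δ₁ δ₂ inj ex
  have po' := CommRingCat.isPushout_tensorProduct C C' A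
  let θ := IsPushout.isoIsPushout _ _ po po'
  have e1 : in₁ ≫ θ.hom = CommRingCat.ofHom (Algebra.TensorProduct.includeLeftRingHom) :=
    IsPushout.inl_isoIsPushout_hom _ _ po po'
  have e2 : in₂ ≫ θ.hom = CommRingCat.ofHom Algebra.TensorProduct.includeRight.toRingHom :=
    IsPushout.inr_isoIsPushout_hom _ _ po po'
  constructor
  · intro x y hxy
    apply h1
    have := congrArg θ.hom.hom hxy
    have h (z) : θ.hom.hom (in₁.hom z) = Algebra.TensorProduct.includeLeftRingHom z := congr($e1 z)
    rwa [h, h] at this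
  · intro b hb
    have := hb (CommRingCat.of (C' ⊗[C] D))
      (θ.hom ≫ CommRingCat.ofHom (Algebra.TensorProduct.map (AlgHom.id C C') δ₁).toRingHom)
      (θ.hom ≫ CommRingCat.ofHom (Algebra.TensorProduct.map (AlgHom.id C C') δ₂).toRingHom)
      (CommRingCat.ofHom Algebra.TensorProduct.includeRight.toRingHom) ?_ ?_ ?_
    · obtain ⟨z, hz⟩ := h2 (θ.hom.hom b) this
      refine ⟨z, ?_⟩
      have h : θ.hom.hom (in₁.hom z) = Algebra.TensorProduct.includeLeftRingHom z := congr($e1 z)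
      rw [hz] at h
      have := congrArg θ.inv.hom h
      simpa using this
    · rw [reassoc_of% e1, reassoc_of% e1]; ext x
      simp
    · rw [reassoc_of% e2]; ext x
      simp; rfl
    · rw [reassoc_of% e2]; ext x
      simp; rfl

theorem fq_factor {M C B : CommRingCat.{u}} (i : C ⟶ B) (hi : Function.Injective i.hom) (w : M ⟶ B)
    (h : ∀ x, w.hom x ∈ Set.range i.hom) : ∃ v : M ⟶ C, v ≫ i = w := by
  let e := RingEquiv.ofBijective i.hom.rangeRestrict
    ⟨fun x y hxy => hi (congrArg Subtype.val hxy), i.hom.rangeRestrict_surjective⟩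
  let w' : M →+* i.hom.range := w.hom.codRestrict i.hom.range h
  refine ⟨CommRingCat.ofHom (e.symm.toRingHom.comp w'), ?_⟩
  ext x
  have := congrArg Subtype.val (e.apply_symm_apply (w' x))
  exact this

/-- A piece. -/
theorem fq_piece {p n : ℕ} {R X Y : Scheme.{u}} {φ : X ⟶ Y} {r₁ r₂ : R ⟶ X}
    (hg : FQGood p n φ r₁ r₂) {X' Y' : Scheme.{u}} {fX : X' ⟶ X} {φ' : X' ⟶ Y'} {f : Y' ⟶ Y}
    [Flat f] (hpb : IsPullback fX φ' φ f) (y : Y') (O : Y'.Opens) (hy : y ∈ O) :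
    ∃ (C' B : CommRingCat.{u}) (g : Spec C' ⟶ Y') (in₁ : C' ⟶ B) (m : Spec B ⟶ X'),
      IsOpenImmersion g ∧ y ∈ Set.range g ∧ Set.range g ⊆ O ∧
      IsPullback m (Spec.map in₁) φ' g ∧ Function.Injective in₁.hom ∧
      ∀ (M : CommRingCat.{u}) (w : M ⟶ B),
        (∀ (S : Scheme.{u}) (a b : S ⟶ Spec B) (ρ : S ⟶ R), a ≫ Spec.map in₁ = b ≫ Spec.map in₁ →
          a ≫ m ≫ fX = ρ ≫ r₁ → b ≫ m ≫ fX = ρ ≫ r₂ → a ≫ Spec.map w = b ≫ Spec.map w) →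
        ∃ v : M ⟶ C', v ≫ in₁ = w := by
  obtain ⟨C, A, D, s, d₁, d₂, j, i, l, hc, hyj⟩ := hg.chart (f y)
  have := hc.oi
  obtain ⟨V, hV, hyV, hVO⟩ := exists_isAffineOpen_mem_and_subset (x := y)
    (U := O ⊓ f ⁻¹ᵁ j.opensRange) ⟨hy, hyj⟩
  let g := hV.fromSpec
  have hgr : Set.range g = V := hV.range_fromSpec
  have hle : Set.range (g ≫ f) ⊆ Set.range j := by
    rintro _ ⟨z, rfl⟩
    have : g z ∈ (V : Set Y') := hgr ▸ ⟨z, rfl⟩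
    exact (hVO this).2
  obtain ⟨c, hcc⟩ := Spec.map_surjective (IsOpenImmersion.lift j (g ≫ f) hle)
  have hcj : Spec.map c ≫ j = g ≫ f := by rw [hcc]; exact IsOpenImmersion.lift_fac _ _ _
  have hcf : Flat (Spec.map c) := by
    have hp : IsPullback (Spec.map c) (𝟙 _) j (g ≫ f) := by
      refine IsPullback.of_isLimit' ⟨by rw [hcj]; simp⟩ (PullbackCone.IsLimit.mk _ (fun t => t.snd)
        (fun t => ?_) (fun t => by simp) (fun t m _ h2 => by simpa using h2))
      rw [← cancel_mono j, Category.assoc, hcj]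
      exact t.condition.symm
    exact MorphismProperty.of_isPullback (P := @Flat) hp.flip inferInstance
  rw [Flat.SpecMap_iff] at hcf
  have po := IsPushout.of_hasPushout c s
  have pbs := isPullback_SpecMap_of_isPushout _ _ _ _ po
  have big := pbs.flip.paste_horiz hc.pb
  rw [hcj] at big
  let m := hpb.lift (Spec.map (pushout.inr c s) ≫ i) (Spec.map (pushout.inl c s) ≫ g)
    (by rw [Category.assoc]; exact big.w)
  have hm1 : m ≫ fX = Spec.map (pushout.inr c s) ≫ i := hpb.lift_fst _ _ _
  have hm2 : m ≫ φ' = Spec.map (pushout.inl c s) ≫ g := hpb.lift_snd _ _ _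
  obtain ⟨h1, h2⟩ := fq_ring hc.w hc.inj hc.ex hcf po
  refine ⟨_, _, g, pushout.inl c s, m, inferInstance, hgr ▸ hyV, hgr ▸ fun z hz => (hVO hz).1,
    IsPullback.of_right (by rw [hm1]; exact big) hm2 hpb, h1, ?_⟩
  intro M w hw
  refine fq_factor _ h1 w fun x => h2 _ ?_
  intro E e₁ e₂ ρ q1 q2 q3
  have := hw (Spec E) (Spec.map e₁) (Spec.map e₂) (Spec.map ρ ≫ l) ?_ ?_ ?_
  · rw [← Spec.map_comp, ← Spec.map_comp] at this
    exact congr($(Spec.map_injective this) x)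
  · rw [← Spec.map_comp, ← Spec.map_comp, q1]
  · rw [hm1, ← Spec.map_comp_assoc, q2, Spec.map_comp_assoc, Category.assoc, hc.l₁]
  · rw [hm1, ← Spec.map_comp_assoc, q3, Spec.map_comp_assoc, Category.assoc, hc.l₂]

theorem fq_hom_ext {X Y : Scheme.{u}} {f g : X ⟶ Y}
    (H : ∀ x : X, ∃ (V : Scheme.{u}) (j : V ⟶ X) (_ : IsOpenImmersion j), x ∈ Set.range j ∧
      j ≫ f = j ≫ g) : f = g := by
  apply Scheme.hom_ext_of_forall
  intro x
  obtain ⟨V, j, hj, hx, h⟩ := H x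
  refine ⟨j.opensRange, hx, ?_⟩
  rw [← cancel_epi j.isoOpensRange.hom]
  simpa using h

theorem fq_epi {p n : ℕ} [Fact p.Prime] {R X Y : Scheme.{u}} {φ : X ⟶ Y} {r₁ r₂ : R ⟶ X}
    (hg : FQGood p n φ r₁ r₂) {X' Y' : Scheme.{u}} {fX : X' ⟶ X} {φ' : X' ⟶ Y'} {f : Y' ⟶ Y}
    [Flat f] (hpb : IsPullback fX φ' φ f) {Z : Scheme.{u}} {v v' : Y' ⟶ Z}
    (h : φ' ≫ v = φ' ≫ v') : v = v' := by
  have hs : Surjective φ' := MorphismProperty.of_isPullback (P := @Surjective) hpb (fq_surjective hg)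
  apply fq_hom_ext
  intro y
  obtain ⟨x, rfl⟩ := hs.1 y
  have hxx : v (φ' x) = v' (φ' x) := by
    rw [← Scheme.Hom.comp_apply, h, Scheme.Hom.comp_apply]
  obtain ⟨W, hW, hyW, -⟩ := exists_isAffineOpen_mem_and_subset (x := v (φ' x)) (U := ⊤) trivial
  obtain ⟨C', B, g, in₁, m, hgo, hyg, hgO, pb, inj, -⟩ := fq_piece hg hpb (φ' x)
    (v ⁻¹ᵁ W ⊓ v' ⁻¹ᵁ W) ⟨hyW, by change v' (φ' x) ∈ W; rwa [← hxx]⟩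
  refine ⟨_, g, hgo, hyg, ?_⟩
  have l1 : Set.range (g ≫ v) ⊆ Set.range hW.fromSpec := by
    rw [hW.range_fromSpec]; rintro _ ⟨z, rfl⟩; exact (hgO ⟨z, rfl⟩).1
  have l2 : Set.range (g ≫ v') ⊆ Set.range hW.fromSpec := by
    rw [hW.range_fromSpec]; rintro _ ⟨z, rfl⟩; exact (hgO ⟨z, rfl⟩).2
  obtain ⟨a, ha⟩ := Spec.map_surjective (IsOpenImmersion.lift hW.fromSpec (g ≫ v) l1)
  obtain ⟨a', ha'⟩ := Spec.map_surjective (IsOpenImmersion.lift hW.fromSpec (g ≫ v') l2)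
  have e1 : Spec.map a ≫ hW.fromSpec = g ≫ v := by rw [ha]; exact IsOpenImmersion.lift_fac _ _ _
  have e2 : Spec.map a' ≫ hW.fromSpec = g ≫ v' := by rw [ha']; exact IsOpenImmersion.lift_fac _ _ _
  have : a ≫ in₁ = a' ≫ in₁ := by
    apply Spec.map_injective
    rw [Spec.map_comp, Spec.map_comp, ← cancel_mono hW.fromSpec, Category.assoc, Category.assoc,
      e1, e2, ← pb.w_assoc, ← pb.w_assoc, h]
  have : a = a' := by
    ext z
    exact inj congr($this z)
  rw [← e1, ← e2, this]

theorem fq_mem_range {P X' V Y' : Scheme.{u}} {m : P ⟶ X'} {e : P ⟶ V} {φ' : X' ⟶ Y'} {g : V ⟶ Y'}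
    (pb : IsPullback m e φ' g) {x : X'} (hx : φ' x ∈ Set.range g) : x ∈ Set.range m := by
  obtain ⟨z, hz⟩ := hx
  obtain ⟨w, hw, -⟩ := Scheme.Pullback.exists_preimage_pullback x z hz.symm
  refine ⟨pb.isoPullback.inv w, ?_⟩
  rw [← Scheme.Hom.comp_apply, pb.isoPullback_inv_fst, hw]

/-- Descent along a good quotient after flat base change. -/
theorem fq_desc {p n : ℕ} [Fact p.Prime] {R X Y : Scheme.{u}} {φ : X ⟶ Y} {r₁ r₂ : R ⟶ X}
    (hg : FQGood p n φ r₁ r₂) {X' Y' : Scheme.{u}} {fX : X' ⟶ X} {φ' : X' ⟶ Y'} {f : Y' ⟶ Y}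
    [Flat f] (hpb : IsPullback fX φ' φ f) {Z : Scheme.{u}} (u : X' ⟶ Z)
    (hu : ∀ (S : Scheme.{u}) (a b : S ⟶ X') (ρ : S ⟶ R), a ≫ φ' = b ≫ φ' →
      a ≫ fX = ρ ≫ r₁ → b ≫ fX = ρ ≫ r₂ → a ≫ u = b ≫ u) : ∃ v : Y' ⟶ Z, φ' ≫ v = u := by
  have hs : Surjective φ' := MorphismProperty.of_isPullback (P := @Surjective) hpb (fq_surjective hg)
  have hcl : UniversallyClosed φ' :=
    MorphismProperty.of_isPullback (P := @UniversallyClosed) hpb (fq_univClosed hg)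
  have hin : UniversallyInjective φ' :=
    MorphismProperty.of_isPullback (P := @UniversallyInjective) hpb (fq_univInj hg)
  have key : ∀ y : Y', ∃ (V P : Scheme.{u}) (g : V ⟶ Y') (m : P ⟶ X') (e : P ⟶ V) (v : V ⟶ Z),
      IsOpenImmersion g ∧ y ∈ Set.range g ∧ IsPullback m e φ' g ∧ e ≫ v = m ≫ u := by
    intro y
    obtain ⟨x, rfl⟩ := hs.1 y
    obtain ⟨W, hW, hyW, -⟩ := exists_isAffineOpen_mem_and_subset (x := u x) (U := ⊤) trivial
    let O : Y'.Opens := ⟨(Set.image φ' ((u ⁻¹ᵁ W : X'.Opens) : Set X')ᶜ)ᶜ,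
      (φ'.isClosedMap _ (u ⁻¹ᵁ W).2.isClosed_compl).isOpen_compl⟩
    have hO : ∀ z : X', φ' z ∈ O → u z ∈ W := by
      intro z hz
      by_contra hc
      exact hz ⟨z, hc, rfl⟩
    obtain ⟨C', B, g, in₁, m, hgo, hyg, hgO, pb, inj, hfac⟩ := fq_piece hg hpb (φ' x) O (by
      rintro ⟨z, hz, hzx⟩
      have := φ'.injective hzx
      subst this
      exact hz hyW)
    have l1 : Set.range (m ≫ u) ⊆ Set.range hW.fromSpec := by
      rw [hW.range_fromSpec]; rintro _ ⟨z, rfl⟩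
      refine hO (m z) ?_
      rw [← Scheme.Hom.comp_apply, pb.w]
      exact hgO ⟨_, rfl⟩
    obtain ⟨w, hw⟩ := Spec.map_surjective (IsOpenImmersion.lift hW.fromSpec (m ≫ u) l1)
    have e1 : Spec.map w ≫ hW.fromSpec = m ≫ u := by rw [hw]; exact IsOpenImmersion.lift_fac _ _ _
    obtain ⟨v, hv⟩ := hfac _ w (by
      intro S a b ρ h1 h2 h3
      rw [← cancel_mono hW.fromSpec, Category.assoc, Category.assoc, e1]
      have := hu S (a ≫ m) (b ≫ m) ρ (by
        rw [Category.assoc, Category.assoc, pb.w, reassoc_of% h1]) (by simpa using h2)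
        (by simpa using h3)
      simpa using this)
    refine ⟨_, _, g, m, Spec.map in₁, Spec.map v ≫ hW.fromSpec, hgo, hyg, pb, ?_⟩
    rw [← e1, ← hv, Spec.map_comp_assoc]
  choose V P g m e v hgo hyg pb hev using key
  let 𝒰 : Y'.OpenCover := {
    I₀ := Y', X i := V i, f i := g i,
    mem₀ := by
      rw [Scheme.presieve₀_mem_precoverage_iff]
      refine ⟨fun x ↦ ⟨x, hyg x⟩, hgo⟩ }
  have compat : ∀ x y : Y', pullback.fst (g x) (g y) ≫ v x = pullback.snd (g x) (g y) ≫ v y := by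
    intro x y
    have := hgo x
    have := hgo y
    have pb2 := (IsPullback.of_hasPullback φ' (pullback.fst (g x) (g y) ≫ g x))
    refine fq_epi hg (f := (pullback.fst (g x) (g y) ≫ g x) ≫ f) (pb2.paste_horiz hpb) ?_
    have t1 : pullback.snd φ' (pullback.fst (g x) (g y) ≫ g x) ≫ pullback.fst (g x) (g y) ≫ v x
        = pullback.fst _ _ ≫ u := by
      have := (pb x).lift_snd (pullback.fst _ _)
        (pullback.snd φ' (pullback.fst (g x) (g y) ≫ g x) ≫ pullback.fst (g x) (g y))
        (by simp [pullback.condition])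
      have h2 := (pb x).lift_fst (pullback.fst _ _)
        (pullback.snd φ' (pullback.fst (g x) (g y) ≫ g x) ≫ pullback.fst (g x) (g y))
        (by simp [pullback.condition])
      rw [← reassoc_of% this, hev, reassoc_of% h2]
    have t2 : pullback.snd φ' (pullback.fst (g x) (g y) ≫ g x) ≫ pullback.snd (g x) (g y) ≫ v y
        = pullback.fst _ _ ≫ u := by
      have hw : pullback.fst φ' (pullback.fst (g x) (g y) ≫ g x) ≫ φ' =
        (pullback.snd φ' (pullback.fst (g x) (g y) ≫ g x) ≫ pullback.snd (g x) (g y)) ≫ g y := by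
        rw [pullback.condition, Category.assoc, pullback.condition]
      have := (pb y).lift_snd _ _ hw
      have h2 := (pb y).lift_fst _ _ hw
      rw [← reassoc_of% this, hev, reassoc_of% h2]
    rw [t1, t2]
  refine ⟨𝒰.glueMorphisms v compat, ?_⟩
  apply fq_hom_ext
  intro x
  have := hgo (φ' x)
  refine ⟨_, m (φ' x), MorphismProperty.of_isPullback (P := @IsOpenImmersion) (pb _).flip (hgo _),
    fq_mem_range (pb _) (hyg _), ?_⟩
  rw [(pb (φ' x)).w_assoc, ← hev]
  congr 1
  exact 𝒰.ι_glueMorphisms v compat (φ' x)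

theorem fq_loc {A A' D D' : Type u} [CommRing A] [CommRing A'] [CommRing D] [CommRing D']
    (d₁ d₂ : A →+* D) (d₁' d₂' : A' →+* D') (rA : A →+* A') (rD : D →+* D')
    (h₁' : ∀ x, rD (d₁ x) = d₁' (rA x)) (h₂' : ∀ x, rD (d₂ x) = d₂' (rA x))
    (a : A) (ha : d₁ a = d₂ a)
    (hA : @IsLocalization.Away A _ a A' _ rA.toAlgebra)
    (hD : @IsLocalization.Away D _ (d₁ a) D' _ rD.toAlgebra)
    (σ : d₁.eqLocus d₂ →+* d₁'.eqLocus d₂') (hσ : ∀ x, (σ x : A') = rA x) :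
    @IsLocalization.Away (d₁.eqLocus d₂) _ (⟨a, ha⟩ : d₁.eqLocus d₂) (d₁'.eqLocus d₂') _
      σ.toAlgebra := by
  let _ := rA.toAlgebra
  let _ := rD.toAlgebra
  let _ := σ.toAlgebra
  have ha' : d₁' (rA a) = d₂' (rA a) := by rw [← h₁', ← h₂', ha]
  refine IsLocalization.Away.mk _ ?_ ?_ ?_
  · obtain ⟨b, hb⟩ := (IsLocalization.Away.algebraMap_isUnit (S := A') a).exists_right_inv
    change rA a * b = 1 at hb
    have hbm : d₁' b = d₂' b := by
      have e1 := congrArg d₁' hb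
      have e2 := congrArg d₂' hb
      simp only [map_mul, map_one] at e1 e2
      rw [← ha'] at e2
      calc d₁' b = d₁' b * (d₁' (rA a) * d₂' b) := by rw [e2, mul_one]
        _ = (d₁' (rA a) * d₁' b) * d₂' b := by ring
        _ = d₂' b := by rw [e1, one_mul]
    refine IsUnit.of_mul_eq_one (⟨b, hbm⟩ : d₁'.eqLocus d₂') (Subtype.ext ?_)
    change (σ ⟨a, ha⟩ : A') * b = 1
    rw [hσ, hb]
  · rintro ⟨s, hs⟩
    obtain ⟨m, b, hb⟩ := IsLocalization.Away.surj a s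
    change s * rA a ^ m = rA b at hb
    have : rD (d₁ b) = rD (d₂ b) := by
      rw [h₁', h₂', ← hb, map_mul, map_mul, map_pow, map_pow, ha']
      congr 1
    obtain ⟨N, hN⟩ := IsLocalization.Away.exists_of_eq (S := D') (d₁ a) this
    refine ⟨m + N, ⟨a ^ N * b, ?_⟩, Subtype.ext ?_⟩
    · change d₁ (a ^ N * b) = d₂ (a ^ N * b)
      rw [map_mul, map_mul, map_pow, map_pow, hN, ha]
    · change s * (σ ⟨a, ha⟩ : A') ^ (m + N) = (σ ⟨a ^ N * b, _⟩ : A')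
      rw [hσ, hσ]
      simp only [map_mul, map_pow]
      rw [← hb, pow_add]; ring
  · rintro ⟨x, hx⟩ ⟨y, hy⟩ hxy
    have : rA x = rA y := by
      have := congrArg Subtype.val hxy
      change (σ ⟨x, hx⟩ : A') = (σ ⟨y, hy⟩ : A') at this
      rwa [hσ, hσ] at this
    obtain ⟨N, hN⟩ := IsLocalization.Away.exists_of_eq (S := A') a this
    exact ⟨N, Subtype.ext hN⟩

section
variable {R X S : Scheme.{u}} (f : X ⟶ S) (r₁ r₂ : R ⟶ X) (h : r₁ ≫ f = r₂ ≫ f)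

theorem fq_le₁ (U : S.Opens) : (r₁ ≫ f) ⁻¹ᵁ U ≤ r₁ ⁻¹ᵁ (f ⁻¹ᵁ U) := le_rfl

theorem fq_le₂ (h : r₁ ≫ f = r₂ ≫ f) (U : S.Opens) : (r₁ ≫ f) ⁻¹ᵁ U ≤ r₂ ⁻¹ᵁ (f ⁻¹ᵁ U) := by rw [h]; exact le_rfl

/-- First restriction map. -/
def fqD₁ (U : S.Opens) : Γ(X, f ⁻¹ᵁ U) ⟶ Γ(R, (r₁ ≫ f) ⁻¹ᵁ U) := r₁.appLE _ _ (fq_le₁ f r₁ U)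

/-- Second restriction map. -/
def fqD₂ (U : S.Opens) : Γ(X, f ⁻¹ᵁ U) ⟶ Γ(R, (r₁ ≫ f) ⁻¹ᵁ U) := r₂.appLE _ _ (fq_le₂ f r₁ r₂ h U)

/-- restriction on X -/
def fqResX {U V : S.Opens} (i : V ≤ U) : Γ(X, f ⁻¹ᵁ U) ⟶ Γ(X, f ⁻¹ᵁ V) :=
  X.presheaf.map (homOfLE (f.preimage_mono i)).op

theorem fqD₁_res {U V : S.Opens} (i : V ≤ U) : fqD₁ f r₁ U ≫ fqResX (r₁ ≫ f) i =
    fqResX f i ≫ fqD₁ f r₁ V := by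
  simp only [fqD₁, fqResX, Scheme.Hom.map_appLE, Scheme.Hom.appLE_map]

theorem fqD₂_res {U V : S.Opens} (i : V ≤ U) : fqD₂ f r₁ r₂ h U ≫ fqResX (r₁ ≫ f) i =
    fqResX f i ≫ fqD₂ f r₁ r₂ h V := by
  simp only [fqD₂, fqResX, Scheme.Hom.map_appLE, Scheme.Hom.appLE_map]

/-- Invariant functions. -/
def fqC (U : S.Opens) : Subring Γ(X, f ⁻¹ᵁ U) := (fqD₁ f r₁ U).hom.eqLocus (fqD₂ f r₁ r₂ h U).hom

theorem fqC_mem {U V : S.Opens} (i : V ≤ U) (x : Γ(X, f ⁻¹ᵁ U)) (hx : x ∈ fqC f r₁ r₂ h U) :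
    (fqResX f i).hom x ∈ fqC f r₁ r₂ h V := by
  have e1 := congr($(fqD₁_res f r₁ i) x)
  have e2 := congr($(fqD₂_res f r₁ r₂ h i) x)
  simp only [CommRingCat.hom_comp, RingHom.comp_apply] at e1 e2
  change (fqD₁ f r₁ V).hom _ = (fqD₂ f r₁ r₂ h V).hom _
  rw [← e1, ← e2]
  congr 1

/-- The restriction map on invariants. -/
def fqCRes {U V : S.Opens} (i : V ≤ U) : fqC f r₁ r₂ h U →+* fqC f r₁ r₂ h V :=
  (fqResX f i).hom.restrict _ _ (fqC_mem f r₁ r₂ h i)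

/-- The presheaf of invariants. -/
def fqF : S.Opensᵒᵖ ⥤ CommRingCat.{u} where
  obj U := CommRingCat.of (fqC f r₁ r₂ h U.unop)
  map {U V} i := CommRingCat.ofHom (fqCRes f r₁ r₂ h i.unop.le)
  map_id U := by
    ext x
    change (X.presheaf.map (𝟙 _)).hom x.1 = x.1
    simp
  map_comp {U V W} i j := by
    ext x
    change (X.presheaf.map _).hom x.1 = ((X.presheaf.map _) ≫ (X.presheaf.map _)).hom x.1
    rw [← X.presheaf.map_comp]
    rfl

theorem fq_app_mem (U : S.Opens) (x : Γ(S, U)) : (f.app U).hom x ∈ fqC f r₁ r₂ h U := by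
  change (fqD₁ f r₁ U).hom _ = (fqD₂ f r₁ r₂ h U).hom _
  have e : f.app U ≫ fqD₁ f r₁ U = f.app U ≫ fqD₂ f r₁ r₂ h U := by
    simp only [Scheme.Hom.app_eq_appLE, fqD₁, fqD₂, Scheme.Hom.appLE_comp_appLE, h]
  exact congr($e x)

/-- The structure map. -/
def fqα : S.presheaf ⟶ fqF f r₁ r₂ h where
  app U := CommRingCat.ofHom ((f.app U.unop).hom.codRestrict _ (fq_app_mem f r₁ r₂ h U.unop))
  naturality {U V} i := by ext x; exact Subtype.ext congr($(f.naturality i) x)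

end
section
variable {R X S : Scheme.{u}} (f : X ⟶ S) (r₁ r₂ : R ⟶ X) (h : r₁ ≫ f = r₂ ≫ f)

open Scheme.AffineZariskiSite

theorem fq_isLoc [IsAffineHom f] {U V : S.Opens} (hU : IsAffineOpen U) (i : V ≤ U) (r : Γ(S, U))
    (hV : V = S.basicOpen r) :
    @IsLocalization.Away _ _ ((f.app U).hom r) Γ(X, f ⁻¹ᵁ V) _ (fqResX f i).hom.toAlgebra := by
  exact (hU.preimage f).isLocalization_of_eq_basicOpen _ (homOfLE (f.preimage_mono i))
    (by rw [hV, Scheme.preimage_basicOpen])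

theorem fq_coeq [IsAffineHom f] [IsAffineHom (r₁ ≫ f)] :
    ((toOpensFunctor S).op.whiskerLeft (fqα f r₁ r₂ h)).Coequifibered := by
  refine coequifibered_iff_forall_isLocalizationAway.mpr fun U r ↦ ?_
  have hA := fq_isLoc f U.2 (S.basicOpen_le r) r rfl
  have hD := fq_isLoc (r₁ ≫ f) U.2 (S.basicOpen_le r) r rfl
  have e : ((r₁ ≫ f).app U.1).hom r = (fqD₁ f r₁ U.1).hom ((f.app U.1).hom r) := by
    have e : (r₁ ≫ f).app U.1 = f.app U.1 ≫ fqD₁ f r₁ U.1 := by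
      simp only [Scheme.Hom.app_eq_appLE, fqD₁, Scheme.Hom.appLE_comp_appLE]
    exact congr($e r)
  rw [e] at hD
  exact fq_loc (fqD₁ f r₁ U.1).hom (fqD₂ f r₁ r₂ h U.1).hom
    (fqD₁ f r₁ (S.basicOpen r)).hom (fqD₂ f r₁ r₂ h (S.basicOpen r)).hom
    (fqResX f (S.basicOpen_le r)).hom (fqResX (r₁ ≫ f) (S.basicOpen_le r)).hom
    (fun x => congr($(fqD₁_res f r₁ (S.basicOpen_le r)) x))
    (fun x => congr($(fqD₂_res f r₁ r₂ h (S.basicOpen_le r)) x))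
    _ (fq_app_mem f r₁ r₂ h U.1 r) hA hD (fqCRes f r₁ r₂ h (S.basicOpen_le r)) (fun x => rfl)

end

theorem fq_relSpec {S : Scheme.{u}} {F : S.Opensᵒᵖ ⥤ CommRingCat.{u}} (α : S.presheaf ⟶ F)
    (H : ((Scheme.AffineZariskiSite.toOpensFunctor S).op.whiskerLeft α).Coequifibered) :
    ∃ (Y : Scheme.{u}) (π : Y ⟶ S) (j : ∀ U : S.Opens, IsAffineOpen U → (Spec (F.obj (op U)) ⟶ Y)),
      (∀ U hU, IsPullback (j U hU) (Spec.map (α.app (op U))) π hU.fromSpec) ∧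
      (∀ (U V : S.Opens) (hU : IsAffineOpen U) (hV : IsAffineOpen V) (r : Γ(S, U))
        (e : V = S.basicOpen r) (i : V ≤ U), Spec.map (F.map (homOfLE i).op) ≫ j U hU = j V hV) := by
  let d := Scheme.AffineZariskiSite.relativeGluingData H
  have : (d.functor ⋙ Scheme.forget).IsLocallyDirected :=
    Scheme.Cover.RelativeGluingData.instIsLocallyDirectedI₀CompFunctorForgetOfIsThin ..
  refine ⟨d.glued, d.toBase, fun U hU => colimit.ι d.functor ⟨U, hU⟩, ?_, ?_⟩
  · intro U hU
    have h1 := (d.isPullback_natTrans_ι_toBase ⟨U, hU⟩).flip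
    refine h1.of_iso (Iso.refl _) (Iso.refl _) hU.isoSpec (Iso.refl _) ?_ ?_ ?_ ?_
    · exact (Category.comp_id _).trans (Category.id_comp _).symm
    · change (Spec.map (α.app (op U)) ≫ hU.isoSpec.inv) ≫ hU.isoSpec.hom = 𝟙 _ ≫ _
      rw [Category.assoc, Iso.inv_hom_id, Category.comp_id, Category.id_comp]
    · exact (Category.comp_id _).trans (Category.id_comp _).symm
    · change U.ι ≫ 𝟙 _ = hU.isoSpec.hom ≫ hU.fromSpec
      rw [hU.isoSpec_hom_fromSpec, Category.comp_id]
  · rintro U V hU hV r e i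
    subst e
    let U' : S.AffineZariskiSite := ⟨U, hU⟩
    exact colimit.w d.functor (homOfLE (U'.basicOpen_le r))

/-- Gluing a morphism out of the source of an affine morphism. -/
theorem fq_glue {X S Y : Scheme.{u}} (f : X ⟶ S) [IsAffineHom f]
    (m : ∀ U : S.Opens, IsAffineOpen U → (Spec Γ(X, f ⁻¹ᵁ U) ⟶ Y))
    (hm : ∀ (U V : S.Opens) (hU : IsAffineOpen U) (hV : IsAffineOpen V) (r : Γ(S, U))
        (_ : V = S.basicOpen r) (i : V ≤ U), Spec.map (fqResX f i) ≫ m U hU = m V hV) :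
    ∃ φ : X ⟶ Y, ∀ U hU, (IsAffineOpen.preimage hU f).fromSpec ≫ φ = m U hU := by
  let 𝒰 : X.OpenCover := {
    I₀ := S.affineOpens, X U := Spec Γ(X, f ⁻¹ᵁ U.1), f U := (IsAffineOpen.preimage U.2 f).fromSpec,
    mem₀ := by
      rw [Scheme.presieve₀_mem_precoverage_iff]
      refine ⟨fun x ↦ ?_, fun U => inferInstance⟩
      obtain ⟨W, hW, hyW, -⟩ := exists_isAffineOpen_mem_and_subset (x := f x) (U := ⊤) trivial
      refine ⟨⟨W, hW⟩, ?_⟩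
      change x ∈ Set.range (hW.preimage f).fromSpec
      rw [(hW.preimage f).range_fromSpec]
      exact hyW }
  have hres : ∀ (U V : S.Opens) (hU : IsAffineOpen U) (hV : IsAffineOpen V) (i : V ≤ U),
      Spec.map (fqResX f i) ≫ (hU.preimage f).fromSpec = (hV.preimage f).fromSpec :=
    fun U V hU hV i => (hU.preimage f).map_fromSpec (hV.preimage f) _
  have compat : ∀ U V : S.affineOpens, pullback.fst (𝒰.f U) (𝒰.f V) ≫ m U.1 U.2 =
      pullback.snd (𝒰.f U) (𝒰.f V) ≫ m V.1 V.2 := by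
    rintro ⟨U, hU⟩ ⟨V, hV⟩
    apply fq_hom_ext
    intro z
    set q : pullback (𝒰.f ⟨U, hU⟩) (𝒰.f ⟨V, hV⟩) ⟶ X := pullback.fst _ _ ≫ 𝒰.f ⟨U, hU⟩ with hq
    have hq' : q = pullback.snd _ _ ≫ 𝒰.f ⟨V, hV⟩ := pullback.condition
    have h1 : f (q z) ∈ U := by
      have : q z ∈ Set.range (hU.preimage f).fromSpec := ⟨pullback.fst (𝒰.f ⟨U, hU⟩) (𝒰.f ⟨V, hV⟩) z, rfl⟩
      rwa [(hU.preimage f).range_fromSpec] at this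
    have h2 : f (q z) ∈ V := by
      have : q z ∈ Set.range (hV.preimage f).fromSpec :=
        ⟨pullback.snd (𝒰.f ⟨U, hU⟩) (𝒰.f ⟨V, hV⟩) z, by rw [hq']; rfl⟩
      rwa [(hV.preimage f).range_fromSpec] at this
    obtain ⟨r, r', e, hx⟩ := exists_basicOpen_le_affine_inter hU hV _ ⟨h1, h2⟩
    have hW := hU.basicOpen r
    have iV : S.basicOpen r ≤ V := e.trans_le (S.basicOpen_le r')
    let t : Spec Γ(X, f ⁻¹ᵁ (S.basicOpen r)) ⟶ pullback (𝒰.f ⟨U, hU⟩) (𝒰.f ⟨V, hV⟩) :=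
      pullback.lift (Spec.map (fqResX f (S.basicOpen_le r))) (Spec.map (fqResX f iV)) (by
        change _ ≫ (hU.preimage f).fromSpec = _ ≫ (hV.preimage f).fromSpec
        rw [hres U _ hU hW, hres V _ hV hW])
    have ht : t ≫ q = (hW.preimage f).fromSpec := by
      rw [hq, ← hres U _ hU hW (S.basicOpen_le r)]
      exact pullback.lift_fst_assoc ..
    have oq : IsOpenImmersion q := inferInstance
    have ot : IsOpenImmersion (t ≫ q) := by rw [ht]; infer_instance
    have ot' : IsOpenImmersion t := IsOpenImmersion.of_comp t q
    refine ⟨_, t, ot', ?_, ?_⟩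
    · have : q z ∈ Set.range (hW.preimage f).fromSpec := by
        rw [(hW.preimage f).range_fromSpec]; exact hx
      obtain ⟨w, hw⟩ := this
      refine ⟨w, q.isOpenEmbedding.injective ?_⟩
      rw [← Scheme.Hom.comp_apply, ht, hw]
    · have e1 : t ≫ pullback.fst _ _ = Spec.map (fqResX f (S.basicOpen_le r)) := pullback.lift_fst ..
      have e2 : t ≫ pullback.snd _ _ = Spec.map (fqResX f iV) := pullback.lift_snd ..
      rw [reassoc_of% e1, reassoc_of% e2, hm U _ hU hW r rfl, hm V _ hV hW r' e]
  refine ⟨𝒰.glueMorphisms (fun U => m U.1 U.2) compat, fun U hU => ?_⟩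
  exact 𝒰.ι_glueMorphisms _ compat ⟨U, hU⟩

/-- Existence of good quotients. -/
theorem fq_exists {p n : ℕ} {R X S : Scheme.{u}} (f : X ⟶ S) [IsAffineHom f] (r₁ r₂ : R ⟶ X)
    (h : r₁ ≫ f = r₂ ≫ f) [IsAffineHom (r₁ ≫ f)]
    (hpow : ∀ U (a : Γ(X, f ⁻¹ᵁ U)), a ^ p ^ n ∈ Set.range (f.app U).hom)
    (hchar : ∀ U, (p : Γ(X, U)) = 0) :
    ∃ (Y : Scheme.{u}) (φ : X ⟶ Y), FQGood p n φ r₁ r₂ := by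
  obtain ⟨Y, π, j, hpb, hj⟩ := fq_relSpec _ (fq_coeq f r₁ r₂ h)
  let s : ∀ U : S.Opens, (fqF f r₁ r₂ h).obj (op U) ⟶ Γ(X, f ⁻¹ᵁ U) := fun U =>
    CommRingCat.ofHom (fqC f r₁ r₂ h U).subtype
  obtain ⟨φ, hφ⟩ := fq_glue f (fun U hU => Spec.map (s U) ≫ j U hU) (by
    intro U V hU hV r e i
    have : s U ≫ fqResX f i = (fqF f r₁ r₂ h).map (homOfLE i).op ≫ s V := rfl
    rw [← Spec.map_comp_assoc, this, Spec.map_comp_assoc, hj U V hU hV r e i])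
  have hs : ∀ U, (fqα f r₁ r₂ h).app (op U) ≫ s U = f.app U := fun U => rfl
  have hf : ∀ U (hU : IsAffineOpen U), (hU.preimage f).fromSpec ≫ f =
      Spec.map (f.app U) ≫ hU.fromSpec := fun U hU => by
    rw [Scheme.Hom.app_eq_appLE, IsAffineOpen.SpecMap_appLE_fromSpec]
  have hπ : φ ≫ π = f := by
    apply fq_hom_ext
    intro x
    obtain ⟨W, hW, hyW, -⟩ := exists_isAffineOpen_mem_and_subset (x := f x) (U := ⊤) trivial
    refine ⟨_, (hW.preimage f).fromSpec, inferInstance, ?_, ?_⟩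
    · rw [(hW.preimage f).range_fromSpec]; exact hyW
    · rw [reassoc_of% (hφ W hW), (hpb W hW).w, hf _ hW, ← hs, Spec.map_comp_assoc]
  have hout : ∀ U (hU : IsAffineOpen U), IsPullback (hU.preimage f).fromSpec (Spec.map (f.app U)) f
      hU.fromSpec := fun U hU => by
    refine (IsOpenImmersion.isPullback _ _ _ _ (hf U hU) ?_).flip
    ext1
    simp [(hU.preimage f).opensRange_fromSpec, hU.opensRange_fromSpec]
  have hpb2 : ∀ U (hU : IsAffineOpen U),
      IsPullback (hU.preimage f).fromSpec (Spec.map (s U)) φ (j U hU) := fun U hU => by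
    refine IsPullback.of_bot ?_ (hφ U hU) (hpb U hU)
    rw [hπ, ← Spec.map_comp, hs]
    exact hout U hU
  have hl₁ : ∀ U (hU : IsAffineOpen U), (hU.preimage (r₁ ≫ f)).fromSpec ≫ r₁ =
      Spec.map (fqD₁ f r₁ U) ≫ (hU.preimage f).fromSpec := fun U hU => by
    rw [fqD₁, IsAffineOpen.SpecMap_appLE_fromSpec]
  have hl₂ : ∀ U (hU : IsAffineOpen U), (hU.preimage (r₁ ≫ f)).fromSpec ≫ r₂ =
      Spec.map (fqD₂ f r₁ r₂ h U) ≫ (hU.preimage f).fromSpec := fun U hU => by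
    rw [fqD₂, IsAffineOpen.SpecMap_appLE_fromSpec]
  have hw : ∀ U, s U ≫ fqD₁ f r₁ U = s U ≫ fqD₂ f r₁ r₂ h U := fun U => by
    ext x
    exact x.2
  refine ⟨Y, φ, ?_, ?_⟩
  · apply fq_hom_ext
    intro x
    obtain ⟨W, hW, hyW, -⟩ :=
      exists_isAffineOpen_mem_and_subset (x := (r₁ ≫ f) x) (U := ⊤) trivial
    refine ⟨_, (hW.preimage (r₁ ≫ f)).fromSpec, inferInstance, ?_, ?_⟩
    · rw [(hW.preimage (r₁ ≫ f)).range_fromSpec]; exact hyW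
    · rw [reassoc_of% (hl₁ W hW), reassoc_of% (hl₂ W hW), hφ W hW, ← Spec.map_comp_assoc, ← Spec.map_comp_assoc, hw]
  · intro y
    obtain ⟨W, hW, hyW, -⟩ := exists_isAffineOpen_mem_and_subset (x := π y) (U := ⊤) trivial
    refine ⟨_, _, _, s W, fqD₁ f r₁ W, fqD₂ f r₁ r₂ h W, j W hW, (hW.preimage f).fromSpec,
      (hW.preimage (r₁ ≫ f)).fromSpec, ⟨?_, hpb2 W hW, hl₁ W hW, hl₂ W hW, hw W, ?_, ?_, ?_, ?_⟩, ?_⟩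
    · exact MorphismProperty.of_isPullback (P := @IsOpenImmersion) (hpb W hW).flip inferInstance
    · exact Subtype.val_injective
    · intro a ha
      exact ⟨⟨a, ha⟩, rfl⟩
    · intro a
      obtain ⟨b, hb⟩ := hpow W a
      exact ⟨⟨(f.app W).hom b, fq_app_mem f r₁ r₂ h W b⟩, hb⟩
    · exact Subtype.ext ((map_natCast (fqC f r₁ r₂ h W).subtype p).trans (hchar (f ⁻¹ᵁ W)))
    · exact fq_mem_range (hpb W hW) (by rw [hW.range_fromSpec]; exact hyW)

theorem fq_pre {X : Scheme.{u}} {q : ℕ} {F : X ⟶ X} (hF : IsAbsoluteFrobenius X q F)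
    (U : X.Opens) : F ⁻¹ᵁ U = U := by
  ext x
  change F x ∈ U ↔ x ∈ U
  have : F x = x := hF.1 x
  rw [this]

theorem fq_frob_affine {X : Scheme.{u}} {q : ℕ} {F : X ⟶ X} (hF : IsAbsoluteFrobenius X q F) :
    IsAffineHom F := ⟨fun U hU => by rw [fq_pre hF]; exact hU⟩

theorem fq_frob_pow {X : Scheme.{u}} {q : ℕ} {F : X ⟶ X} (hF : IsAbsoluteFrobenius X q F)
    (U : X.Opens) (a : Γ(X, F ⁻¹ᵁ U)) : a ^ q ∈ Set.range (F.app U).hom := by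
  have e : op U = op (F ⁻¹ᵁ U) := by rw [fq_pre hF]
  refine ⟨X.presheaf.map (eqToHom e.symm) a, ?_⟩
  refine (hF.2 U e _).trans ?_
  rw [← map_pow, ← CommRingCat.comp_apply, ← X.presheaf.map_comp, eqToHom_trans, eqToHom_refl,
    X.presheaf.map_id]
  rfl

theorem fq_char (p : ℕ) [CharP k p] {X : Scheme.{u}} (f : X ⟶ Spk k) (U : X.Opens) :
    (p : Γ(X, U)) = 0 := by
  let θ : k →+* Γ(X, U) := ((Scheme.ΓSpecIso (CommRingCat.of k)).inv ≫ f.appTop ≫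
    X.presheaf.map (homOfLE le_top).op).hom
  rw [← map_natCast θ p, CharP.cast_eq_zero, map_zero]

theorem fq_good_iso {p n : ℕ} {R X Y Q : Scheme.{u}} {φ : X ⟶ Y} {r₁ r₂ : R ⟶ X}
    (hg : FQGood p n φ r₁ r₂) (w : Y ⟶ Q) [IsIso w] (φ' : X ⟶ Q) (hw : φ ≫ w = φ') :
    FQGood p n φ' r₁ r₂ := by
  subst hw
  refine ⟨by rw [reassoc_of% hg.w], fun y => ?_⟩
  obtain ⟨C, A, D, s, d₁, d₂, j, i, l, hc, z, hz⟩ := hg.chart (inv w y)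
  refine ⟨C, A, D, s, d₁, d₂, j ≫ w, i, l, ⟨?_, ?_, hc.l₁, hc.l₂, hc.w, hc.inj, hc.ex, hc.pow,
    hc.char⟩, z, ?_⟩
  · have := hc.oi
    infer_instance
  · have : IsPullback (𝟙 X) φ (φ ≫ w) w := IsPullback.of_horiz_isIso ⟨by simp⟩
    simpa using hc.pb.paste_horiz this
  · rw [Scheme.Hom.comp_apply, hz, ← Scheme.Hom.comp_apply, IsIso.inv_hom_id]
    rfl

/-- first projection of the action groupoid -/
abbrev fqR₁ (I : GroupSchemeOver k) (X : SchemeOver k) : pullback I.str X.str ⟶ X.carrier :=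
  pullback.snd I.str X.str

/-- action map of the action groupoid -/
abbrev fqR₂ {I : GroupSchemeOver k} {X : SchemeOver k} (β : ActionOver I X) :
    pullback I.str X.str ⟶ X.carrier :=
  β.act (pullback.fst I.str X.str) (pullback.snd I.str X.str) pullback.condition

theorem fq_quot_good {p n : ℕ} [Fact p.Prime] [CharP k p] {I : GroupSchemeOver k}
    {X : SchemeOver k} (β : ActionOver I X) (Q : SchemeOver k) (φ : X.carrier ⟶ Q.carrier)
    (hQ : IsCatQuotient β Q φ) (F : X.carrier ⟶ X.carrier)
    (hF : IsAbsoluteFrobenius X.carrier (p ^ n) F) [IsAffineHom I.str]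
    (hinv : fqR₁ I X ≫ F = fqR₂ β ≫ F) : FQGood p n φ (fqR₁ I X) (fqR₂ β) := by
  have := fq_frob_affine hF
  have h0 : IsAffineHom (fqR₁ I X) :=
    MorphismProperty.of_isPullback (P := @IsAffineHom) (IsPullback.of_hasPullback I.str X.str)
      inferInstance
  have h1 : IsAffineHom (fqR₁ I X ≫ F) := by
    exact @instIsAffineHomCompScheme _ _ _ _ _ h0 this
  obtain ⟨Y, φY, hY⟩ := fq_exists (p := p) (n := n) F (fqR₁ I X) (fqR₂ β) hinv (fq_frob_pow hF)
    (fq_char p X.str)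
  have hpb : IsPullback (𝟙 X.carrier) φY φY (𝟙 Y) := IsPullback.of_horiz_isIso ⟨by simp⟩
  obtain ⟨π, hπ⟩ := fq_desc hY hpb X.str (by
    intro S a b ρ h1 h2 h3
    simp only [Category.comp_id] at h2 h3
    rw [h2, h3, Category.assoc, Category.assoc, β.act_str])
  obtain ⟨w, hw⟩ := fq_desc hY hpb φ (by
    intro S a b ρ h1 h2 h3
    simp only [Category.comp_id] at h2 h3
    rw [h2, h3, Category.assoc, Category.assoc, hQ.2.1])
  obtain ⟨v, hv, -⟩ := hQ.2.2 ⟨Y, π⟩ φY hπ (by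
    intro T g x h
    have := hY.w
    have e1 : x = pullback.lift g x h ≫ fqR₁ I X := (pullback.lift_snd _ _ _).symm
    have e2 : β.act g x h = pullback.lift g x h ≫ fqR₂ β := by
      rw [β.act_natural _ _ _ _ (by rw [pullback.lift_fst, pullback.lift_snd, h])]
      exact β.act_congr (pullback.lift_fst _ _ _).symm (pullback.lift_snd _ _ _).symm _ _
    calc β.act g x h ≫ φY = pullback.lift g x h ≫ fqR₂ β ≫ φY := by rw [e2, Category.assoc]
      _ = (pullback.lift g x h ≫ fqR₁ I X) ≫ φY := by rw [← this, Category.assoc]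
      _ = x ≫ φY := by rw [← e1])
  have e1 : w ≫ v = 𝟙 Y := fq_epi hY hpb (by rw [reassoc_of% hw, hv, Category.comp_id])
  have e2 : v ≫ w = 𝟙 _ :=
    (hQ.2.2 Q φ hQ.1 hQ.2.1).unique (by rw [reassoc_of% hv, hw]) (Category.comp_id _)
  have : IsIso w := ⟨v, e1, e2⟩
  exact fq_good_iso hY w φ hw

section
variable {p n : ℕ} [Fact p.Prime] {I : GroupSchemeOver k}
    {X : SchemeOver k} {β : ActionOver I X} {Q : SchemeOver k} {φ : X.carrier ⟶ Q.carrier}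

theorem fq_pb (hs : φ ≫ Q.str = X.str) {T : Scheme.{u}} (t : T ⟶ Spk k) :
    ∃ φ' : pullback t X.str ⟶ pullback t Q.str,
      φ' ≫ pullback.fst _ _ = pullback.fst _ _ ∧ φ' ≫ pullback.snd _ _ = pullback.snd _ _ ≫ φ ∧
      IsPullback (pullback.snd t X.str) φ' φ (pullback.snd t Q.str) := by
  refine ⟨pullback.lift (pullback.fst _ _) (pullback.snd _ _ ≫ φ)
    (by rw [Category.assoc, hs, pullback.condition]), pullback.lift_fst _ _ _,
    pullback.lift_snd _ _ _, ?_⟩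
  refine IsPullback.of_bot ?_ (pullback.lift_snd _ _ _).symm
    (IsPullback.of_hasPullback t Q.str).flip
  rw [pullback.lift_fst]
  have := (IsPullback.of_hasPullback t X.str).flip
  convert! this using 1

theorem fq_ext (hg : FQGood p n φ (fqR₁ I X) (fqR₂ β)) (hs : φ ≫ Q.str = X.str)
    {T : Scheme.{u}} (t : T ⟶ Spk k) {Z : Scheme.{u}}
    (V V' : ∀ (S : Scheme.{u}) (a : S ⟶ T) (y : S ⟶ Q.carrier), a ≫ t = y ≫ Q.str → (S ⟶ Z))
    (hV : ∀ (S S' : Scheme.{u}) (s : S' ⟶ S) (a y h h'), s ≫ V S a y h = V S' (s ≫ a) (s ≫ y) h')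
    (hV' : ∀ (S S' : Scheme.{u}) (s : S' ⟶ S) (a y h h'),
      s ≫ V' S a y h = V' S' (s ≫ a) (s ≫ y) h')
    (H : ∀ (S : Scheme.{u}) (a : S ⟶ T) (x : S ⟶ X.carrier) (_ : a ≫ t = x ≫ X.str) (h),
      V S a (x ≫ φ) h = V' S a (x ≫ φ) h)
    (S : Scheme.{u}) (a : S ⟶ T) (y : S ⟶ Q.carrier) (h) : V S a y h = V' S a y h := by
  obtain ⟨φ', h1, h2, hpb⟩ := fq_pb hs t
  have cV : ∀ (S : Scheme.{u}) (a a' : S ⟶ T) (y y' : S ⟶ Q.carrier) (_ : a = a') (_ : y = y') h h',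
      V S a y h = V S a' y' h' := by rintro S a _ y _ rfl rfl _ _; rfl
  have cV' : ∀ (S : Scheme.{u}) (a a' : S ⟶ T) (y y' : S ⟶ Q.carrier) (_ : a = a') (_ : y = y') h h',
      V' S a y h = V' S a' y' h' := by rintro S a _ y _ rfl rfl _ _; rfl
  have key : V _ (pullback.fst t Q.str) (pullback.snd t Q.str) pullback.condition =
      V' _ (pullback.fst t Q.str) (pullback.snd t Q.str) pullback.condition := by
    refine fq_epi hg hpb ?_
    have e : (φ' ≫ pullback.fst t Q.str) ≫ t = (φ' ≫ pullback.snd t Q.str) ≫ Q.str := by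
      simp [pullback.condition]
    have e2 : pullback.fst t X.str ≫ t = (pullback.snd t X.str ≫ φ) ≫ Q.str := by
      rw [Category.assoc, hs, pullback.condition]
    rw [hV _ _ _ _ _ _ e, hV' _ _ _ _ _ _ e, cV _ _ _ _ _ h1 h2 _ e2, cV' _ _ _ _ _ h1 h2 _ e2]
    exact H _ _ _ pullback.condition _
  have := congrArg (pullback.lift a y h ≫ ·) key
  have e : (pullback.lift a y h ≫ pullback.fst t Q.str) ≫ t =
    (pullback.lift a y h ≫ pullback.snd t Q.str) ≫ Q.str := by
    rw [pullback.lift_fst, pullback.lift_snd, h]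
  change pullback.lift a y h ≫ V _ _ _ _ = pullback.lift a y h ≫ V' _ _ _ _ at this
  rw [hV _ _ _ _ _ _ e, hV' _ _ _ _ _ _ e, cV _ _ _ _ _ (pullback.lift_fst _ _ _)
    (pullback.lift_snd _ _ _) _ h, cV' _ _ _ _ _ (pullback.lift_fst _ _ _)
    (pullback.lift_snd _ _ _) _ h] at this
  exact this

theorem fq_desc_fam (hg : FQGood p n φ (fqR₁ I X) (fqR₂ β)) (hs : φ ≫ Q.str = X.str)
    {T : Scheme.{u}} (t : T ⟶ Spk k) {Z : Scheme.{u}}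
    (U : ∀ (S : Scheme.{u}) (a : S ⟶ T) (x : S ⟶ X.carrier), a ≫ t = x ≫ X.str → (S ⟶ Z))
    (hU : ∀ (S S' : Scheme.{u}) (s : S' ⟶ S) (a x h h'), s ≫ U S a x h = U S' (s ≫ a) (s ≫ x) h')
    (hinv : ∀ (S : Scheme.{u}) (a : S ⟶ T) (m : S ⟶ I.carrier) (x : S ⟶ X.carrier) (h h' h''),
      U S a (β.act m x h) h' = U S a x h'') :
    ∃ V : ∀ (S : Scheme.{u}) (a : S ⟶ T) (y : S ⟶ Q.carrier), a ≫ t = y ≫ Q.str → (S ⟶ Z),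
      (∀ (S S' : Scheme.{u}) (s : S' ⟶ S) (a y h h'),
        s ≫ V S a y h = V S' (s ≫ a) (s ≫ y) h') ∧
      ∀ (S : Scheme.{u}) (a : S ⟶ T) (x : S ⟶ X.carrier) (h h'), V S a (x ≫ φ) h = U S a x h' := by
  obtain ⟨φ', h1, h2, hpb⟩ := fq_pb hs t
  have cU : ∀ (S : Scheme.{u}) (a a' : S ⟶ T) (y y' : S ⟶ X.carrier) (_ : a = a') (_ : y = y') h h',
      U S a y h = U S a' y' h' := by rintro S a _ y _ rfl rfl _ _; rfl
  obtain ⟨v, hv⟩ := fq_desc hg hpb (U _ (pullback.fst t X.str) (pullback.snd t X.str)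
    pullback.condition) (by
      intro S a b ρ e1 e2 e3
      have e4 : a ≫ pullback.fst _ _ = b ≫ pullback.fst _ _ := by
        rw [← h1, reassoc_of% e1]
      have c1 : (a ≫ pullback.fst t X.str) ≫ t = (a ≫ pullback.snd t X.str) ≫ X.str := by
        simp [pullback.condition]
      have c2 : (b ≫ pullback.fst t X.str) ≫ t = (b ≫ pullback.snd t X.str) ≫ X.str := by
        simp [pullback.condition]
      have c3 : (ρ ≫ pullback.fst I.str X.str) ≫ I.str = (ρ ≫ pullback.snd I.str X.str) ≫ X.str := by
        simp [pullback.condition]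
      have e5 : b ≫ pullback.snd t X.str = β.act _ _ c3 := by
        rw [e3]; exact β.act_natural _ _ _ _ _
      rw [hU _ _ _ _ _ _ c1, hU _ _ _ _ _ _ c2]
      rw [cU _ _ _ _ _ e4.symm e5 c2 (by rw [← e5, e4, c2]), hinv _ _ _ _ _ _ (by rw [c1, e2])]
      exact cU _ _ _ _ _ rfl e2 _ _)
  refine ⟨fun S a y h => pullback.lift a y h ≫ v, ?_, ?_⟩
  · intro S S' s a y h h'
    rw [← Category.assoc]
    congr 1
    apply pullback.hom_ext
    · rw [Category.assoc, pullback.lift_fst, pullback.lift_fst]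
    · rw [Category.assoc, pullback.lift_snd, pullback.lift_snd]
  · intro S a x h h'
    have : pullback.lift a (x ≫ φ) h = pullback.lift a x h' ≫ φ' := by
      apply pullback.hom_ext
      · rw [Category.assoc, h1, pullback.lift_fst, pullback.lift_fst]
      · rw [Category.assoc, h2, pullback.lift_snd, ← Category.assoc, pullback.lift_snd]
    change pullback.lift a (x ≫ φ) h ≫ v = _
    rw [this, Category.assoc, hv, hU _ _ _ _ _ _ (by rw [pullback.lift_fst, pullback.lift_snd, h'])]
    exact cU _ _ _ _ _ (pullback.lift_fst _ _ _) (pullback.lift_snd _ _ _) _ _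

end

/-- Points of a group scheme over a fixed base point. -/
abbrev FQPts (G : GroupSchemeOver k) {T : Scheme.{u}} (t : T ⟶ Spk k) : Type u :=
  {a : T ⟶ G.carrier // a ≫ G.str = t}

section
variable (G : GroupSchemeOver k) {T : Scheme.{u}} (t : T ⟶ Spk k)

instance fqPtsMul : Mul (FQPts G t) :=
  ⟨fun a b => ⟨G.mul a.1 b.1 (a.2.trans b.2.symm), (G.mul_str _ _ _).trans a.2⟩⟩

instance fqPtsOne : One (FQPts G t) :=
  ⟨⟨t ≫ G.one, by rw [Category.assoc, G.one_str, Category.comp_id]⟩⟩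

instance fqPtsInv : Inv (FQPts G t) := ⟨fun a => ⟨G.inv a.1, (G.inv_str _).trans a.2⟩⟩

theorem fq_mul_val (a b : FQPts G t) : (a * b).1 = G.mul a.1 b.1 (a.2.trans b.2.symm) := rfl
theorem fq_one_val : (1 : FQPts G t).1 = t ≫ G.one := rfl

instance fqPtsGroup : Group (FQPts G t) := Group.ofLeftAxioms
  (fun a b c => Subtype.ext (G.mul_assoc _ _ _ _ _ _ _))
  (fun a => Subtype.ext (by
    have hh : (a.1 ≫ G.str ≫ G.one) ≫ G.str = a.1 ≫ G.str := by
      simp only [Category.assoc, G.one_str, Category.comp_id]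
    refine (G.mul_congr ?_ rfl _ hh).trans (G.one_mul a.1 hh)
    rw [fq_one_val, ← Category.assoc, a.2]))
  (fun a => Subtype.ext ((G.inv_mul a.1 _).trans (by
    rw [fq_one_val, ← Category.assoc, a.2])))

end

/-- Induced map on points. -/
def fqPtsMap {G H : GroupSchemeOver k} (f : GroupHom G H) {T : Scheme.{u}} (t : T ⟶ Spk k) :
    FQPts G t →* FQPts H t :=
  MonoidHom.mk' (fun a => ⟨a.1 ≫ f.hom, by rw [Category.assoc, f.hom_str, a.2]⟩)
    (fun a b => Subtype.ext (f.hom_mul _ _ _ _))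

section
variable {p : ℕ} [Fact p.Prime] [CharP k p] {G : GroupSchemeOver k} {X : SchemeOver k}
    {α : ActionOver G X} {n : ℕ} {GT : TwistedGroupData k p n G} {Gn : GroupSchemeOver k}
    {ι : GroupHom Gn G}

theorem fq_kernel_affine (hιci : IsClosedImmersion ι.hom)
    (hker : IsPullback ι.hom Gn.str GT.rel.hom GT.tw.one) : IsAffineHom Gn.str := by
  have e : ι.hom ≫ GT.abs = Gn.str ≫ GT.tw.one ≫ GT.pr := by
    rw [← GT.rel_pr, reassoc_of% hker.w]
  have hsub : Subsingleton (Spk k) := inferInstanceAs (Subsingleton (PrimeSpectrum k))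
  have hs : Subsingleton Gn.carrier := by
    refine ⟨fun x y => ι.hom.isClosedEmbedding.injective ?_⟩
    have hx : ∀ z, ι.hom z = (GT.tw.one ≫ GT.pr) (Gn.str z) := by
      intro z
      rw [← Scheme.Hom.comp_apply, ← e, Scheme.Hom.comp_apply]
      exact (GT.abs_frob.1 _).symm
    rw [hx, hx, Subsingleton.elim (Gn.str x) (Gn.str y)]
  have hpt : Nonempty (Spk k) := inferInstanceAs (Nonempty (PrimeSpectrum k))
  have x : Gn.carrier := Gn.one hpt.some
  obtain ⟨W, hW, hyW, -⟩ := exists_isAffineOpen_mem_and_subset (x := x) (U := ⊤) trivial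
  have : W = ⊤ := top_le_iff.mp fun y _ => by rwa [Subsingleton.elim y x]
  subst this
  have hW2 : IsAffine (⊤ : Gn.carrier.Opens).toScheme := hW
  have : IsAffine Gn.carrier := .of_isIso (Scheme.topIso Gn.carrier).inv
  infer_instance

theorem fq_hinv_X (hker : IsPullback ι.hom Gn.str GT.rel.hom GT.tw.one)
    (FDX : FrobeniusData k p n X) (TA : TwistedActionData α GT FDX) :
    fqR₁ Gn X ≫ FDX.abs = fqR₂ (α.res ι) ≫ FDX.abs := by
  rw [← FDX.rel_pr, ← Category.assoc, ← Category.assoc]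
  congr 1
  have h0 : ∀ {T : Scheme.{u}} (m : T ⟶ Gn.carrier) (x : T ⟶ X.carrier) (h : m ≫ Gn.str = x ≫ X.str),
      (α.res ι).act m x h ≫ FDX.rel = x ≫ FDX.rel := by
    intro T m x h
    have c0 : ((m ≫ ι.hom) ≫ GT.rel.hom) ≫ GT.tw.str = (x ≫ FDX.rel) ≫ FDX.tw.str := by
      rw [Category.assoc, Category.assoc, Category.assoc, GT.rel.hom_str, ι.hom_str, FDX.rel_str, h]
    refine (TA.rel_equivariant _ _ _ c0).trans ?_
    have c1 : (m ≫ ι.hom) ≫ GT.rel.hom = (x ≫ FDX.rel) ≫ FDX.tw.str ≫ GT.tw.one := by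
      rw [Category.assoc, hker.w, ← Category.assoc, h, Category.assoc, Category.assoc,
        ← FDX.rel_str, Category.assoc]
    refine (TA.tact.act_congr c1 rfl _ (by rw [← c1]; exact c0)).trans (TA.tact.one_act _ _)
  exact (h0 _ _ _).symm

theorem fq_hinv_G (hker : IsPullback ι.hom Gn.str GT.rel.hom GT.tw.one) :
    fqR₁ Gn G.toSchemeOver ≫ GT.abs = fqR₂ (G.selfAction.res ι) ≫ GT.abs := by
  rw [← GT.rel_pr, ← Category.assoc, ← Category.assoc]
  congr 1
  have h0 : ∀ {T : Scheme.{u}} (m : T ⟶ Gn.carrier) (x : T ⟶ G.carrier)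
      (h : m ≫ Gn.str = x ≫ G.str),
      (G.selfAction.res ι).act m x h ≫ GT.rel.hom = x ≫ GT.rel.hom := by
    intro T m x h
    have c0 : ((m ≫ ι.hom) ≫ GT.rel.hom) ≫ GT.tw.str = (x ≫ GT.rel.hom) ≫ GT.tw.str := by
      rw [Category.assoc, Category.assoc, Category.assoc, GT.rel.hom_str, ι.hom_str, h]
    refine (GT.rel.hom_mul _ _ _ c0).trans ?_
    have c1 : (m ≫ ι.hom) ≫ GT.rel.hom = (x ≫ GT.rel.hom) ≫ GT.tw.str ≫ GT.tw.one := by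
      rw [Category.assoc, hker.w, ← Category.assoc, h, Category.assoc, Category.assoc,
        ← GT.rel.hom_str, Category.assoc]
    refine (GT.tw.mul_congr c1 rfl _ (by rw [← c1]; exact c0)).trans (GT.tw.one_mul _ _)
  exact (h0 _ _ _).symm

theorem fq_normal (hker : IsPullback ι.hom Gn.str GT.rel.hom GT.tw.one) {T : Scheme.{u}}
    (g : T ⟶ G.carrier) (m : T ⟶ Gn.carrier) (h : m ≫ Gn.str = g ≫ G.str) :
    ∃ (m' : T ⟶ Gn.carrier), m' ≫ Gn.str = g ≫ G.str ∧
      ∀ h1 h2, G.mul (m' ≫ ι.hom) g h1 = G.mul g (m ≫ ι.hom) h2 := by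
  let t := g ≫ G.str
  let g' : FQPts G t := ⟨g, rfl⟩
  let n' : FQPts G t := ⟨m ≫ ι.hom, by rw [Category.assoc, ι.hom_str, h]⟩
  have hn : fqPtsMap GT.rel t n' = 1 := Subtype.ext (by
    change (m ≫ ι.hom) ≫ GT.rel.hom = t ≫ GT.tw.one
    rw [Category.assoc, hker.w, ← Category.assoc, h])
  have hc : fqPtsMap GT.rel t (g' * n' * g'⁻¹) = 1 := by
    rw [map_mul, map_mul, hn, mul_one, ← map_mul, mul_inv_cancel, map_one]
  have hc' : (g' * n' * g'⁻¹).1 ≫ GT.rel.hom = t ≫ GT.tw.one := congrArg Subtype.val hc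
  refine ⟨hker.lift _ _ hc', hker.lift_snd _ _ _, fun h1 h2 => ?_⟩
  have e : (g' * n' * g'⁻¹) * g' = g' * n' := by group
  have e' := congrArg Subtype.val e
  refine (G.mul_congr (hker.lift_fst _ _ _) rfl _ ?_).trans e'
  exact (g' * n' * g'⁻¹).2

end

section
variable {p n : ℕ} [Fact p.Prime] {I : GroupSchemeOver k} {X Q : SchemeOver k} {β : ActionOver I X}
  {φ : X.carrier ⟶ Q.carrier}

theorem fq_ext_two (hg : FQGood p n φ (fqR₁ I X) (fqR₂ β)) (hs : φ ≫ Q.str = X.str)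
    {T T₂ : Scheme.{u}} (t : T ⟶ Spk k) (t₂ : T₂ ⟶ Spk k) {Z : Scheme.{u}}
    (V V' : ∀ (S : Scheme.{u}) (a : S ⟶ T) (b : S ⟶ T₂) (y : S ⟶ Q.carrier),
      a ≫ t = y ≫ Q.str → b ≫ t₂ = y ≫ Q.str → (S ⟶ Z))
    (hV : ∀ (S S' : Scheme.{u}) (s : S' ⟶ S) (a b y h k h' k'),
      s ≫ V S a b y h k = V S' (s ≫ a) (s ≫ b) (s ≫ y) h' k')
    (hV' : ∀ (S S' : Scheme.{u}) (s : S' ⟶ S) (a b y h k h' k'),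
      s ≫ V' S a b y h k = V' S' (s ≫ a) (s ≫ b) (s ≫ y) h' k')
    (H : ∀ (S : Scheme.{u}) (a : S ⟶ T) (b : S ⟶ T₂) (x : S ⟶ X.carrier)
      (_ : a ≫ t = x ≫ X.str) (_ : b ≫ t₂ = x ≫ X.str) (h k),
      V S a b (x ≫ φ) h k = V' S a b (x ≫ φ) h k)
    (S : Scheme.{u}) (a : S ⟶ T) (b : S ⟶ T₂) (y : S ⟶ Q.carrier) (h k) :
    V S a b y h k = V' S a b y h k := by
  have c2 : ∀ {S : Scheme.{u}} (c : S ⟶ pullback t t₂) (y : S ⟶ Q.carrier),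
      c ≫ pullback.fst t t₂ ≫ t = y ≫ Q.str → (c ≫ pullback.snd t t₂) ≫ t₂ = y ≫ Q.str := by
    intro S c y hc
    rw [Category.assoc, ← pullback.condition, hc]
  have c1 : ∀ {S : Scheme.{u}} (c : S ⟶ pullback t t₂) (y : S ⟶ Q.carrier),
      c ≫ pullback.fst t t₂ ≫ t = y ≫ Q.str → (c ≫ pullback.fst t t₂) ≫ t = y ≫ Q.str := by
    intro S c y hc
    rw [Category.assoc, hc]
  have cV : ∀ (S : Scheme.{u}) (a a' : S ⟶ T) (b b' : S ⟶ T₂) (y : S ⟶ Q.carrier) (_ : a = a')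
      (_ : b = b') h k h' k', V S a b y h k = V S a' b' y h' k' := by
    rintro S a _ b _ y rfl rfl _ _ _ _; rfl
  have cV' : ∀ (S : Scheme.{u}) (a a' : S ⟶ T) (b b' : S ⟶ T₂) (y : S ⟶ Q.carrier) (_ : a = a')
      (_ : b = b') h k h' k', V' S a b y h k = V' S a' b' y h' k' := by
    rintro S a _ b _ y rfl rfl _ _ _ _; rfl
  have main := fq_ext hg hs (pullback.fst t t₂ ≫ t)
    (fun S c y hc => V S (c ≫ pullback.fst t t₂) (c ≫ pullback.snd t t₂) y (c1 c y hc) (c2 c y hc))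
    (fun S c y hc => V' S (c ≫ pullback.fst t t₂) (c ≫ pullback.snd t t₂) y (c1 c y hc) (c2 c y hc))
    (by
      intro S S' s c y h h'
      refine (hV _ _ _ _ _ _ _ _ ?_ ?_).trans (cV _ _ _ _ _ _ ?_ ?_ _ _ _ _)
      · rw [← Category.assoc s, c1 _ _ h']
      · rw [← Category.assoc s, c2 _ _ h']
      · rw [Category.assoc]
      · rw [Category.assoc])
    (by
      intro S S' s c y h h'
      refine (hV' _ _ _ _ _ _ _ _ ?_ ?_).trans (cV' _ _ _ _ _ _ ?_ ?_ _ _ _ _)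
      · rw [← Category.assoc s, c1 _ _ h']
      · rw [← Category.assoc s, c2 _ _ h']
      · rw [Category.assoc]
      · rw [Category.assoc])
    (by
      intro S c x h h'
      refine H _ _ _ _ ?_ ?_ _ _
      · rw [c1 _ _ h', Category.assoc, hs]
      · rw [c2 _ _ h', Category.assoc, hs])
    S (pullback.lift a b (h.trans k.symm)) y (by
      rw [← Category.assoc, pullback.lift_fst, h])
  refine ((cV _ _ _ _ _ _ ?_ ?_ _ _ _ _).trans main).trans (cV' _ _ _ _ _ _ ?_ ?_ _ _ _ _)
  · exact (pullback.lift_fst _ _ _).symm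
  · exact (pullback.lift_snd _ _ _).symm
  · exact pullback.lift_fst _ _ _
  · exact pullback.lift_snd _ _ _

end

section
variable {p n : ℕ} [Fact p.Prime] {I J : GroupSchemeOver k} {X Q Y R : SchemeOver k} {β : ActionOver I X}
  {φ : X.carrier ⟶ Q.carrier} {γ : ActionOver J Y} {ψ : Y.carrier ⟶ R.carrier}

/-- Extensionality for families in two variables. -/
theorem fq_ext2 (hg : FQGood p n φ (fqR₁ I X) (fqR₂ β)) (hs : φ ≫ Q.str = X.str)
    (hg' : FQGood p n ψ (fqR₁ J Y) (fqR₂ γ)) (hs' : ψ ≫ R.str = Y.str) {Z : Scheme.{u}}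
    (V V' : ∀ (S : Scheme.{u}) (a : S ⟶ R.carrier) (y : S ⟶ Q.carrier),
      a ≫ R.str = y ≫ Q.str → (S ⟶ Z))
    (hV : ∀ (S S' : Scheme.{u}) (s : S' ⟶ S) (a y h h'), s ≫ V S a y h = V S' (s ≫ a) (s ≫ y) h')
    (hV' : ∀ (S S' : Scheme.{u}) (s : S' ⟶ S) (a y h h'),
      s ≫ V' S a y h = V' S' (s ≫ a) (s ≫ y) h')
    (H : ∀ (S : Scheme.{u}) (a : S ⟶ Y.carrier) (x : S ⟶ X.carrier) (_ : a ≫ Y.str = x ≫ X.str) (h),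
      V S (a ≫ ψ) (x ≫ φ) h = V' S (a ≫ ψ) (x ≫ φ) h)
    (S : Scheme.{u}) (a : S ⟶ R.carrier) (y : S ⟶ Q.carrier) (h) : V S a y h = V' S a y h := by
  have cV : ∀ (S : Scheme.{u}) (a : S ⟶ R.carrier) (y y' : S ⟶ Q.carrier) (_ : y = y') h h',
      V S a y h = V S a y' h' := by rintro S a y _ rfl _ _; rfl
  have cV' : ∀ (S : Scheme.{u}) (a : S ⟶ R.carrier) (y y' : S ⟶ Q.carrier) (_ : y = y') h h',
      V' S a y h = V' S a y' h' := by rintro S a y _ rfl _ _; rfl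
  refine fq_ext hg hs R.str V V' hV hV' ?_ S a y h
  intro S a x ha h
  have c : ∀ {S : Scheme.{u}} {x : S ⟶ X.carrier} {a : S ⟶ R.carrier}, x ≫ X.str = a ≫ R.str →
      a ≫ R.str = (x ≫ φ) ≫ Q.str := by
    intro S x a h
    rw [← h, Category.assoc, hs]
  refine fq_ext hg' hs' X.str (fun S x a h => V S a (x ≫ φ) (c h))
    (fun S x a h => V' S a (x ≫ φ) (c h)) ?_ ?_ ?_ S x a ha.symm
  · intro S S' s x a h h'
    refine (hV _ _ _ _ _ _ ?_).trans (cV _ _ _ _ (Category.assoc _ _ _).symm _ _)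
    rw [c h', Category.assoc s]
  · intro S S' s x a h h'
    refine (hV' _ _ _ _ _ _ ?_).trans (cV' _ _ _ _ (Category.assoc _ _ _).symm _ _)
    rw [c h', Category.assoc s]
  · intro S x a h h'
    exact H S a x h.symm (c h')

/-- Extensionality for families in three variables. -/
theorem fq_ext3 (hg : FQGood p n φ (fqR₁ I X) (fqR₂ β)) (hs : φ ≫ Q.str = X.str)
    (hg' : FQGood p n ψ (fqR₁ J Y) (fqR₂ γ)) (hs' : ψ ≫ R.str = Y.str) {Z : Scheme.{u}}
    (V V' : ∀ (S : Scheme.{u}) (a b : S ⟶ R.carrier) (y : S ⟶ Q.carrier),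
      a ≫ R.str = y ≫ Q.str → b ≫ R.str = y ≫ Q.str → (S ⟶ Z))
    (hV : ∀ (S S' : Scheme.{u}) (s : S' ⟶ S) (a b y h k h' k'),
      s ≫ V S a b y h k = V S' (s ≫ a) (s ≫ b) (s ≫ y) h' k')
    (hV' : ∀ (S S' : Scheme.{u}) (s : S' ⟶ S) (a b y h k h' k'),
      s ≫ V' S a b y h k = V' S' (s ≫ a) (s ≫ b) (s ≫ y) h' k')
    (H : ∀ (S : Scheme.{u}) (a b : S ⟶ Y.carrier) (x : S ⟶ X.carrier)
      (_ : a ≫ Y.str = x ≫ X.str) (_ : b ≫ Y.str = x ≫ X.str) (h k),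
      V S (a ≫ ψ) (b ≫ ψ) (x ≫ φ) h k = V' S (a ≫ ψ) (b ≫ ψ) (x ≫ φ) h k)
    (S : Scheme.{u}) (a b : S ⟶ R.carrier) (y : S ⟶ Q.carrier) (h k) :
    V S a b y h k = V' S a b y h k := by
  have cV : ∀ (S : Scheme.{u}) (a a' b b' : S ⟶ R.carrier) (y y' : S ⟶ Q.carrier) (_ : a = a')
      (_ : b = b') (_ : y = y') h k h' k', V S a b y h k = V S a' b' y' h' k' := by
    rintro S a _ b _ y _ rfl rfl rfl _ _ _ _; rfl
  have cV' : ∀ (S : Scheme.{u}) (a a' b b' : S ⟶ R.carrier) (y y' : S ⟶ Q.carrier) (_ : a = a')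
      (_ : b = b') (_ : y = y') h k h' k', V' S a b y h k = V' S a' b' y' h' k' := by
    rintro S a _ b _ y _ rfl rfl rfl _ _ _ _; rfl
  refine fq_ext_two hg hs R.str R.str V V' hV hV' ?_ S a b y h k
  intro S a b x ha hb h k
  have c : ∀ {S : Scheme.{u}} {x : S ⟶ X.carrier} {a : S ⟶ R.carrier}, a ≫ R.str = x ≫ X.str →
      a ≫ R.str = (x ≫ φ) ≫ Q.str := by
    intro S x a h
    rw [h, Category.assoc, hs]
  have d : ∀ {S : Scheme.{u}} {x : S ⟶ X.carrier} {a : S ⟶ Y.carrier}, a ≫ Y.str = x ≫ X.str →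
      (a ≫ ψ) ≫ R.str = (x ≫ φ) ≫ Q.str := by
    intro S x a h
    rw [Category.assoc, hs', h, Category.assoc, hs]
  have c' : ∀ {S S' : Scheme.{u}} (s : S' ⟶ S) {x : S ⟶ X.carrier} {a : S ⟶ R.carrier},
      a ≫ R.str = (x ≫ φ) ≫ Q.str → (s ≫ a) ≫ R.str = (s ≫ x ≫ φ) ≫ Q.str := by
    intro S S' s x a h
    rw [Category.assoc, h, Category.assoc s]
  refine fq_ext_two hg' hs' X.str R.str
    (fun S x a b h k => V S a b (x ≫ φ) (c (k.trans h.symm)) (c h.symm))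
    (fun S x a b h k => V' S a b (x ≫ φ) (c (k.trans h.symm)) (c h.symm))
    ?_ ?_ ?_ S x a b hb.symm (ha.trans hb.symm)
  · intro S S' s x a b h k h' k'
    exact (hV _ _ _ _ _ _ _ _ (c' s (c (k.trans h.symm))) (c' s (c h.symm))).trans
      (cV _ _ _ _ _ _ _ rfl rfl (Category.assoc _ _ _).symm _ _ _ _)
  · intro S S' s x a b h k h' k'
    exact (hV' _ _ _ _ _ _ _ _ (c' s (c (k.trans h.symm))) (c' s (c h.symm))).trans
      (cV' _ _ _ _ _ _ _ rfl rfl (Category.assoc _ _ _).symm _ _ _ _)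
  intro S x a b h k h' k'
  refine fq_ext_two hg' hs' X.str Y.str
    (fun S x b a h k => V S a (b ≫ ψ) (x ≫ φ) (c h.symm) (d (k.trans h.symm)))
    (fun S x b a h k => V' S a (b ≫ ψ) (x ≫ φ) (c h.symm) (d (k.trans h.symm)))
    ?_ ?_ ?_ S x b a (h.trans k.symm) k.symm
  · intro S S' s x a b h k h' k'
    exact (hV _ _ _ _ _ _ _ _ (c' s (c h.symm)) (c' s (d (k.trans h.symm)))).trans
      (cV _ _ _ _ _ _ _ rfl (Category.assoc _ _ _).symm (Category.assoc _ _ _).symm _ _ _ _)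
  · intro S S' s x a b h k h' k'
    exact (hV' _ _ _ _ _ _ _ _ (c' s (c h.symm)) (c' s (d (k.trans h.symm)))).trans
      (cV' _ _ _ _ _ _ _ rfl (Category.assoc _ _ _).symm (Category.assoc _ _ _).symm _ _ _ _)
  intro S x b a h k h' k'
  exact H S a b x h.symm (k.trans h.symm) _ _

end

section
variable {p n : ℕ} [Fact p.Prime] {G Gn QG : GroupSchemeOver k} {X QX : SchemeOver k}
  {α : ActionOver G X} {ι : GroupHom Gn G} {qG : GroupHom G QG} {φ : X.carrier ⟶ QX.carrier}

theorem fq_family (hgX : FQGood p n φ (fqR₁ Gn X) (fqR₂ (α.res ι))) (hs : φ ≫ QX.str = X.str)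
    (hgG : FQGood p n qG.hom (fqR₁ Gn G.toSchemeOver)
      (fqR₂ (G.selfAction.res ι)))
    (hφ : ∀ {T : Scheme.{u}} (g : T ⟶ Gn.carrier) (x : T ⟶ X.carrier) (h),
      (α.res ι).act g x h ≫ φ = x ≫ φ)
    (hnormal : ∀ {T : Scheme.{u}} (g : T ⟶ G.carrier) (m : T ⟶ Gn.carrier)
      (_ : m ≫ Gn.str = g ≫ G.str),
      ∃ (m' : T ⟶ Gn.carrier), m' ≫ Gn.str = g ≫ G.str ∧
        ∀ h1 h2, G.mul (m' ≫ ι.hom) g h1 = G.mul g (m ≫ ι.hom) h2) :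
    ∃ B : ∀ (S : Scheme.{u}) (a : S ⟶ QG.carrier) (y : S ⟶ QX.carrier),
        a ≫ QG.str = y ≫ QX.str → (S ⟶ QX.carrier),
      (∀ (S S' : Scheme.{u}) (s : S' ⟶ S) (a y h h'),
        s ≫ B S a y h = B S' (s ≫ a) (s ≫ y) h') ∧
      ∀ (S : Scheme.{u}) (g : S ⟶ G.carrier) (x : S ⟶ X.carrier) (h h'),
        B S (g ≫ qG.hom) (x ≫ φ) h = α.act g x h' ≫ φ := by
  have i1 : ∀ {S : Scheme.{u}} {m : S ⟶ Gn.carrier} {r}, m ≫ Gn.str = r →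
      (m ≫ ι.hom) ≫ G.str = r := by
    intro S m r h; rw [Category.assoc, ι.hom_str, h]
  -- moving a point of the kernel out
  have inv2 : ∀ (S : Scheme.{u}) (m : S ⟶ Gn.carrier) (g : S ⟶ G.carrier) (x : S ⟶ X.carrier)
      (h h' h''), α.act (G.mul (m ≫ ι.hom) g h) x h' ≫ φ = α.act g x h'' ≫ φ := by
    intro S m g x h h' h''
    have hm : m ≫ Gn.str = g ≫ G.str := by rw [← h, Category.assoc, ι.hom_str]
    have hm2 : m ≫ Gn.str = α.act g x h'' ≫ X.str := by rw [hm, α.act_str, h'']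
    rw [← hφ m (α.act g x h'') hm2]
    congr 1
    exact α.mul_act _ _ _ _ _ _ _
  obtain ⟨V1, hV1, kV1⟩ := fq_desc_fam hgX hs G.str (fun S g x h => α.act g x h ≫ φ)
    (by
      intro S S' s g x h h'
      change s ≫ α.act g x h ≫ φ = α.act (s ≫ g) (s ≫ x) h' ≫ φ
      rw [← Category.assoc, α.act_natural s g x h h'])
    (by
      intro S g m x h h' h''
      change α.act g ((α.res ι).act m x h) h' ≫ φ = α.act g x h'' ≫ φ
      have hm : m ≫ Gn.str = g ≫ G.str := h.trans h''.symm
      obtain ⟨m', hm', e⟩ := hnormal g m hm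
      have e' := e (i1 hm') (i1 hm).symm
      rw [← inv2 S m' g x (i1 hm') (by rw [G.mul_str, i1 hm', h'']) h'']
      congr 1
      refine (α.mul_act g (m ≫ ι.hom) x (i1 hm).symm ?_ _ _).symm.trans (α.act_congr e'.symm rfl _ _)
      rw [G.mul_str, h''])
  have cV1 : ∀ (S : Scheme.{u}) (a a' : S ⟶ G.carrier) (y y' : S ⟶ QX.carrier) (_ : a = a')
      (_ : y = y') h h', V1 S a y h = V1 S a' y' h' := by rintro S a _ y _ rfl rfl _ _; rfl
  obtain ⟨V2, hV2, kV2⟩ := fq_desc_fam (Q := QG.toSchemeOver) hgG qG.hom_str QX.str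
    (fun S y g h => V1 S g y h.symm)
    (by
      intro S S' s y g h h'
      exact hV1 _ _ _ _ _ _ _)
    (by
      intro S y m g h h' h''
      have c : ∀ {S : Scheme.{u}} {m : S ⟶ Gn.carrier} {g : S ⟶ G.carrier} {y : S ⟶ QX.carrier}
        (_ : m ≫ Gn.str = y ≫ QX.str) (_ : g ≫ G.str = y ≫ QX.str),
        (m ≫ ι.hom) ≫ G.str = g ≫ G.str := fun h k => (i1 h).trans k.symm
      refine fq_ext_two hgX hs Gn.str G.str
        (fun S m g y h k => V1 S (G.mul (m ≫ ι.hom) g (c h k)) y ((G.mul_str _ _ _).trans (i1 h)))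
        (fun S m g y h k => V1 S g y k) ?_ ?_ ?_ S m g y (h.trans h''.symm) h''.symm
      · intro S S' s m g y h k h' k'
        refine (hV1 _ _ _ _ _ _ ?_).trans (cV1 _ _ _ _ _ ?_ rfl _ _)
        · rw [Category.assoc, G.mul_str, i1 h, Category.assoc]
        · refine (G.mul_natural _ _ _ _ ?_).trans (G.mul_congr (Category.assoc _ _ _).symm rfl _ _)
          rw [Category.assoc, c h k, Category.assoc]
      · intro S S' s m g y h k h' k'
        exact hV1 _ _ _ _ _ _ _
      · intro S m g x h k h' k'
        change V1 S (G.mul (m ≫ ι.hom) g _) (x ≫ φ) _ = V1 S g (x ≫ φ) _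
        rw [kV1 _ _ _ _ k, kV1 _ _ _ _ ((G.mul_str _ _ _).trans (i1 h))]
        exact inv2 _ _ _ _ _ _ _)
  refine ⟨fun S a y h => V2 S y a h.symm, ?_, ?_⟩
  · intro S S' s a y h h'
    exact hV2 _ _ _ _ _ _ _
  · intro S g x h h'
    have h2 : (x ≫ φ) ≫ QX.str = g ≫ G.str := by rw [Category.assoc, hs, h']
    exact (kV2 _ _ _ _ h2).trans (kV1 _ _ _ _ _)

end
/-- Let `k` be a field of characteristic `p > 0`, `G` an algebraic group
over `k`, `X` a `G`-scheme of finite type, and `n > 0`. Let `G_n` (embedded by `ι`) be the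
`n`-th Frobenius kernel of `G`. Then there is a unique action of `G/G_n` on `X/G_n` making
`φ_{X,G_n}` equivariant relative to `φ_{G,G_n}`; moreover `ψ_{X,G_n} : X/G_n ⟶ X^{(pⁿ)}` is
equivariant relative to `ψ_{G,G_n} : G/G_n ⟶ G^{(pⁿ)}`. -/
theorem quotient_action_by_frobenius_kernel
    {k : Type u} [Field k] (p : ℕ) [Fact p.Prime] [CharP k p]
    (G : GroupSchemeOver k) (hGalg : G.IsAlgebraic)
    (X : SchemeOver k) (hXft : X.IsFiniteType) (α : ActionOver G X)
    (n : ℕ) (hn : 0 < n)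
    -- the Frobenius twist `G^{(pⁿ)}` as a group, with relative Frobenius homomorphism:
    (GT : TwistedGroupData k p n G)
    -- the `n`-th Frobenius kernel `G_n = ker F^n_{G/k}`:
    (Gn : GroupSchemeOver k) (ι : GroupHom Gn G) (hιci : IsClosedImmersion ι.hom)
    (hker : IsPullback ι.hom Gn.str GT.rel.hom GT.tw.one)
    -- the Frobenius twist of `X` and the twisted action of `G^{(pⁿ)}` on it:
    (FDX : FrobeniusData k p n X) (TA : TwistedActionData α GT FDX)
    -- the categorical quotients `X/G_n` and `G/G_n`:
    (QX : SchemeOver k) (φX : X.carrier ⟶ QX.carrier)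
    (hQX : IsCatQuotient (α.res ι) QX φX)
    (QG : GroupSchemeOver k) (qG : GroupHom G QG)
    (hQG : IsCatQuotient ((G.selfAction).res ι) QG.toSchemeOver qG.hom)
    -- the factorizations of the relative Frobenii through the quotients:
    (ψX : QX.carrier ⟶ FDX.tw.carrier) (hψX : φX ≫ ψX = FDX.rel)
    (ψG : QG.carrier ⟶ GT.tw.carrier) (hψG : qG.hom ≫ ψG = GT.rel.hom) :
    ∃ β : ActionOver QG QX,
      -- `φX` is equivariant relative to `qG`:
      (∀ {T : Scheme.{u}} (g : T ⟶ G.carrier) (x : T ⟶ X.carrier) (h h'),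
        α.act g x h ≫ φX = β.act (g ≫ qG.hom) (x ≫ φX) h') ∧
      -- uniqueness of such an action:
      (∀ β' : ActionOver QG QX,
        (∀ {T : Scheme.{u}} (g : T ⟶ G.carrier) (x : T ⟶ X.carrier) (h h'),
          α.act g x h ≫ φX = β'.act (g ≫ qG.hom) (x ≫ φX) h') →
        ∀ {T : Scheme.{u}} (gq : T ⟶ QG.carrier) (xq : T ⟶ QX.carrier) (h),
          β'.act gq xq h = β.act gq xq h) ∧
      -- `ψX` is equivariant relative to `ψG`:
      (∀ {T : Scheme.{u}} (gq : T ⟶ QG.carrier) (xq : T ⟶ QX.carrier) (h h'),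
        β.act gq xq h ≫ ψX = TA.tact.act (gq ≫ ψG) (xq ≫ ψX) h') := by
  have haff := fq_kernel_affine hιci hker
  have hgX := fq_quot_good (p := p) (n := n) (α.res ι) QX φX hQX FDX.abs FDX.abs_frob
    (fq_hinv_X hker FDX TA)
  have hgG := fq_quot_good (p := p) (n := n) (G.selfAction.res ι) QG.toSchemeOver qG.hom hQG
    GT.abs GT.abs_frob (fq_hinv_G hker)
  have hs := hQX.1
  have hsG : qG.hom ≫ QG.toSchemeOver.str = G.toSchemeOver.str := qG.hom_str
  obtain ⟨B, hB, kB⟩ := fq_family hgX hs hgG hQX.2.1 (fun g m h => fq_normal hker g m h)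
  have cB : ∀ (S : Scheme.{u}) (a a' : S ⟶ QG.carrier) (y y' : S ⟶ QX.carrier) (_ : a = a')
      (_ : y = y') h h', B S a y h = B S a' y' h' := by rintro S a _ y _ rfl rfl _ _; rfl
  have nat1 : ∀ {S S' : Scheme.{u}} (s : S' ⟶ S) {a : S ⟶ QG.carrier} {y : S ⟶ QX.carrier},
      a ≫ QG.str = y ≫ QX.str → (s ≫ a) ≫ QG.str = (s ≫ y) ≫ QX.str := by
    intro S S' s a y h
    rw [Category.assoc, h, Category.assoc]
  have lift1 : ∀ {S : Scheme.{u}} {a : S ⟶ G.carrier} {x : S ⟶ X.carrier},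
      a ≫ G.str = x ≫ X.str → (a ≫ qG.hom) ≫ QG.str = (x ≫ φX) ≫ QX.str := by
    intro S a x h
    rw [Category.assoc, qG.hom_str, h, Category.assoc, hs]
  have B_str : ∀ (S : Scheme.{u}) (a : S ⟶ QG.carrier) (y : S ⟶ QX.carrier) (h),
      B S a y h ≫ QX.str = y ≫ QX.str := by
    refine fq_ext2 hgX hs hgG hsG (fun S a y h => B S a y h ≫ QX.str)
      (fun S a y h => y ≫ QX.str) ?_ ?_ ?_
    · intro S S' s a y h h'
      change s ≫ B S a y h ≫ QX.str = B S' (s ≫ a) (s ≫ y) h' ≫ QX.str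
      rw [← hB S S' s a y h h', Category.assoc]
    · intro S S' s a y h h'
      exact (Category.assoc _ _ _).symm
    · intro S a x h h'
      change B S (a ≫ qG.hom) (x ≫ φX) h' ≫ QX.str = (x ≫ φX) ≫ QX.str
      rw [kB _ _ _ _ h, Category.assoc, Category.assoc, hs, α.act_str]
  have B_one : ∀ (S : Scheme.{u}) (y : S ⟶ QX.carrier) (h),
      B S (y ≫ QX.str ≫ QG.one) y h = y := by
    have c1 : ∀ {S : Scheme.{u}} (y : S ⟶ QX.carrier),
        (y ≫ QX.str ≫ QG.one) ≫ QG.str = y ≫ QX.str := by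
      intro S y
      rw [Category.assoc, Category.assoc, QG.one_str, Category.comp_id]
    intro S y h
    refine fq_ext hgX hs (𝟙 (Spk k)) (fun S a y h => B S (y ≫ QX.str ≫ QG.one) y (c1 y))
      (fun S a y h => y) ?_ ?_ ?_ S (y ≫ QX.str) y (Category.comp_id _)
    · intro S S' s a y h h'
      exact (hB _ _ _ _ _ _ (nat1 s (c1 y))).trans
        (cB _ _ _ _ _ (Category.assoc _ _ _).symm rfl _ _)
    · intro S S' s a y h h'
      rfl
    · intro S a x h h'
      change B S ((x ≫ φX) ≫ QX.str ≫ QG.one) (x ≫ φX) _ = x ≫ φX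
      have h1 : (x ≫ X.str ≫ G.one) ≫ G.str = x ≫ X.str := by
        rw [Category.assoc, Category.assoc, G.one_str, Category.comp_id]
      have e : (x ≫ φX) ≫ QX.str ≫ QG.one = (x ≫ X.str ≫ G.one) ≫ qG.hom := by
        rw [← qG.hom_one, ← hs]
        simp only [Category.assoc]
      rw [cB S _ _ _ _ e rfl _ (lift1 h1), kB _ _ _ _ h1, α.one_act x h1]
  have B_mul : ∀ (S : Scheme.{u}) (g g' : S ⟶ QG.carrier) (y : S ⟶ QX.carrier) (h₁ h₂ h₃ h₄),
      B S (QG.mul g g' h₁) y h₂ = B S g (B S g' y h₃) h₄ := by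
    intro S g g' y h₁ h₂ h₃ h₄
    have d1 : ∀ {S : Scheme.{u}} {a b : S ⟶ QG.carrier} {y : S ⟶ QX.carrier} (h),
        a ≫ QG.str = y ≫ QX.str → (QG.mul a b h) ≫ QG.str = y ≫ QX.str := by
      intro S a b y h h'
      rw [QG.mul_str, h']
    have d2 : ∀ {S : Scheme.{u}} {a b : S ⟶ QG.carrier} {y : S ⟶ QX.carrier} (h),
        a ≫ QG.str = y ≫ QX.str → a ≫ QG.str = B S b y h ≫ QX.str := by
      intro S a b y h h'
      rw [B_str, h']
    refine fq_ext3 hgX hs hgG hsG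
      (fun S a b y h k => B S (QG.mul a b (h.trans k.symm)) y (d1 _ h))
      (fun S a b y h k => B S a (B S b y k) (d2 _ h)) ?_ ?_ ?_ S g g' y (h₃ ▸ h₁) h₃
    · intro S S' s a b y h k h' k'
      exact (hB _ _ _ _ _ _ (nat1 s (d1 _ h))).trans
        (cB _ _ _ _ _ (QG.mul_natural _ _ _ _ _) rfl _ _)
    · intro S S' s a b y h k h' k'
      exact (hB _ _ _ _ _ _ (nat1 s (d2 _ h))).trans
        (cB _ _ _ _ _ rfl (hB _ _ _ _ _ _ _) _ _)
    · intro S a b x h k h' k'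
      change B S (QG.mul (a ≫ qG.hom) (b ≫ qG.hom) _) (x ≫ φX) _ =
        B S (a ≫ qG.hom) (B S (b ≫ qG.hom) (x ≫ φX) _) _
      have hab : a ≫ G.str = b ≫ G.str := h.trans k.symm
      have hm : G.mul a b hab ≫ G.str = x ≫ X.str := by rw [G.mul_str]; exact h
      have ha : a ≫ G.str = α.act b x k ≫ X.str := by rw [α.act_str]; exact h
      rw [cB S _ _ _ _ (qG.hom_mul a b hab (h'.trans k'.symm)).symm rfl _ (lift1 hm),
        kB _ _ _ _ hm, cB S _ _ _ _ rfl (kB _ _ _ _ k) _ (lift1 ha), kB _ _ _ _ ha,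
        α.mul_act a b x hab hm k ha]
  let β : ActionOver QG QX :=
    { act := fun {S} a y h => B S a y h
      act_str := fun {S} a y h => B_str S a y h
      act_natural := fun {S' S} s a y h h' => hB S S' s a y h h'
      one_act := fun {S} y h => B_one S y h
      mul_act := fun {S} g g' y h₁ h₂ h₃ h₄ => B_mul S g g' y h₁ h₂ h₃ h₄ }
  refine ⟨β, ?_, ?_, ?_⟩
  · intro S g x h h'
    exact (kB S g x h' h).symm
  · intro β' hβ' S gq xq h
    refine fq_ext2 hgX hs hgG hsG (fun S a y h => β'.act a y h) (fun S a y h => B S a y h)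
      ?_ ?_ ?_ S gq xq h
    · intro S S' s a y h h'
      exact β'.act_natural _ _ _ _ _
    · intro S S' s a y h h'
      exact hB _ _ _ _ _ _ _
    · intro S a x h h'
      exact (hβ' a x h h').symm.trans (kB _ _ _ _ _).symm
  · intro S gq xq h h'
    have hψXs : ψX ≫ FDX.tw.str = QX.str := by
      have := fq_ext hgX hs (𝟙 (Spk k)) (fun S a y h => y ≫ ψX ≫ FDX.tw.str)
        (fun S a y h => y ≫ QX.str) (fun S S' s a y h h' => (Category.assoc _ _ _).symm)
        (fun S S' s a y h h' => (Category.assoc _ _ _).symm)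
        (fun S a x h h' => by
          change (x ≫ φX) ≫ ψX ≫ FDX.tw.str = (x ≫ φX) ≫ QX.str
          rw [Category.assoc, Category.assoc, hs, reassoc_of% hψX, FDX.rel_str])
        QX.carrier QX.str (𝟙 _) (by rw [Category.comp_id, Category.id_comp])
      simpa only [Category.id_comp] using this
    have hψGs : ψG ≫ GT.tw.str = QG.str := by
      have := fq_ext hgG hsG (𝟙 (Spk k)) (fun S a y h => y ≫ ψG ≫ GT.tw.str)
        (fun S a y h => y ≫ QG.str) (fun S S' s a y h h' => (Category.assoc _ _ _).symm)
        (fun S S' s a y h h' => (Category.assoc _ _ _).symm)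
        (fun S a x h h' => by
          change (x ≫ qG.hom) ≫ ψG ≫ GT.tw.str = (x ≫ qG.hom) ≫ QG.str
          rw [Category.assoc, Category.assoc, qG.hom_str, reassoc_of% hψG, GT.rel.hom_str])
        QG.carrier QG.str (𝟙 _) (by rw [Category.comp_id, Category.id_comp])
      simpa only [Category.id_comp] using this
    have c : ∀ {S : Scheme.{u}} {a : S ⟶ QG.carrier} {y : S ⟶ QX.carrier},
        a ≫ QG.str = y ≫ QX.str → (a ≫ ψG) ≫ GT.tw.str = (y ≫ ψX) ≫ FDX.tw.str := by
      intro S a y h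
      rw [Category.assoc, Category.assoc, hψXs, hψGs, h]
    refine fq_ext2 hgX hs hgG hsG (fun S a y h => B S a y h ≫ ψX)
      (fun S a y h => TA.tact.act (a ≫ ψG) (y ≫ ψX) (c h)) ?_ ?_ ?_ S gq xq h
    · intro S S' s a y h h'
      change s ≫ B S a y h ≫ ψX = B S' (s ≫ a) (s ≫ y) h' ≫ ψX
      rw [← hB S S' s a y h h', Category.assoc]
    · intro S S' s a y h h'
      refine (TA.tact.act_natural _ _ _ _ ?_).trans (TA.tact.act_congr
        (Category.assoc _ _ _).symm (Category.assoc _ _ _).symm _ _)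
      simpa only [Category.assoc] using congrArg (s ≫ ·) (c h)
    · intro S a x h h'
      change B S (a ≫ qG.hom) (x ≫ φX) _ ≫ ψX =
        TA.tact.act ((a ≫ qG.hom) ≫ ψG) ((x ≫ φX) ≫ ψX) _
      rw [kB _ _ _ _ h, Category.assoc, hψX]
      refine (TA.rel_equivariant a x h ?_).trans (TA.tact.act_congr ?_ ?_ _ _)
      · rw [Category.assoc, Category.assoc, GT.rel.hom_str, FDX.rel_str]
        exact h
      · rw [Category.assoc, hψG]
      · rw [Category.assoc, hψX]
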